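/- arXiv:2410.19497 — 13 statements merged into one kernel-verified Lean document; each statement's English description precedes it below -/
import Mathlib

section
/- Fix real numbers L > 0, D > 0 and an angle θ ∈ (−π/2, π/2). Then ψ₂ · Δ > 1, where ψ₂ = (1/(2L)) ∫_{−L}^{L} ((x − D_s)² + D_c²)⁻¹ dx and Δ = √((D² − L²)² + (2 L D_c)²). -/
open Real

lemma aux_integral (L s c : ℝ) (hc : 0 < c) :
    ∫ x in (-L)..L, ((x - s) ^ 2 + c ^ 2)⁻¹ =
      arctan ((L - s) / c) / c - arctan ((-L - s) / c) / c := by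
  have hpos : ∀ x : ℝ, (x - s) ^ 2 + c ^ 2 ≠ 0 := fun x => by positivity
  apply intervalIntegral.integral_eq_sub_of_hasDerivAt (f := fun x => arctan ((x - s) / c) / c)
  · intro x _
    have h := ((((hasDerivAt_id x).sub_const s).div_const c).arctan).div_const c
    have h1 := hpos x
    have h2 : 1 + ((x - s) / c) ^ 2 ≠ 0 := by positivity
    have h3 : 1 + ((x - s) / c) ^ 2 = ((x - s) ^ 2 + c ^ 2) / c ^ 2 := by field_simp; ring
    have h4 : 1 / (1 + ((x - s) / c) ^ 2) * (1 / c) / c = ((x - s) ^ 2 + c ^ 2)⁻¹ := by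
      rw [h3]
      field_simp
    rw [← h4]
    exact h
  · apply Continuous.intervalIntegrable
    exact Continuous.inv₀ (by fun_prop) hpos

lemma aux_arctan (a b : ℝ) (h : a < b) :
    b - a < (arctan b - arctan a) * (√(1 + b ^ 2) * √(1 + a ^ 2)) := by
  have h1 : 0 < arctan b - arctan a := sub_pos.2 (arctan_strictMono h)
  have h2 := sin_lt h1
  have ha : 0 < √(1 + a ^ 2) := by positivity
  have hb : 0 < √(1 + b ^ 2) := by positivity
  rw [sin_sub, sin_arctan, sin_arctan, cos_arctan, cos_arctan] at h2
  have h3 : b / √(1 + b ^ 2) * (1 / √(1 + a ^ 2)) - 1 / √(1 + b ^ 2) * (a / √(1 + a ^ 2))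
      = (b - a) / (√(1 + b ^ 2) * √(1 + a ^ 2)) := by field_simp
  rw [h3, div_lt_iff₀ (by positivity)] at h2
  exact h2

theorem psi2_Delta_gt_one (L D θ : ℝ) (hL : 0 < L) (hD : 0 < D)
    (hθ : θ ∈ Set.Ioo (-(π / 2)) (π / 2)) :
    ((1 / (2 * L)) * ∫ x in (-L)..L, ((x - D * sin θ) ^ 2 + (D * cos θ) ^ 2)⁻¹) *
      Real.sqrt ((D ^ 2 - L ^ 2) ^ 2 + (2 * L * (D * cos θ)) ^ 2) > 1 := by
  have hc : 0 < D * cos θ := mul_pos hD (cos_pos_of_mem_Ioo hθ)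
  have hD2 : D ^ 2 = (D * sin θ) ^ 2 + (D * cos θ) ^ 2 := by
    linear_combination (-D ^ 2) * sin_sq_add_cos_sq θ
  rw [aux_integral _ _ _ hc, hD2]
  generalize D * sin θ = s at *
  generalize D * cos θ = c at *
  have hab : (-L - s) / c < (L - s) / c := by gcongr; linarith
  have key := aux_arctan _ _ hab
  have hS : √((s ^ 2 + c ^ 2 - L ^ 2) ^ 2 + (2 * L * c) ^ 2) =
      c ^ 2 * (√(1 + ((L - s) / c) ^ 2) * √(1 + ((-L - s) / c) ^ 2)) := by
    rw [← Real.sqrt_mul (by positivity), Real.sqrt_eq_iff_mul_self_eq (by positivity) (by positivity)]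
    rw [mul_mul_mul_comm, Real.mul_self_sqrt (by positivity)]
    field_simp
    ring
  rw [hS]
  generalize √(1 + ((L - s) / c) ^ 2) * √(1 + ((-L - s) / c) ^ 2) = S at *
  generalize arctan ((L - s) / c) = p at *
  generalize arctan ((-L - s) / c) = q at *
  have e1 : (L - s) / c - (-L - s) / c = 2 * L / c := by field_simp; ring
  have e2 : 1 / (2 * L) * (p / c - q / c) * (c ^ 2 * S) = (p - q) * S / (2 * L / c) := by
    field_simp
  rw [e1] at key
  rw [e2, gt_iff_lt, one_lt_div (by positivity)]
  exact key
end

section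
/- Let W be the real symmetric 3×3 matrix with rows (ψ₂, 0, 0), (0, D_c²·ψ₄, D_c·ψ̄₃), (0, D_c·ψ̄₃, ψ₂ − D_c²·ψ₄). Then the characteristic polynomial of W factors as (X − γ₁)(X − γ₂)(X − γ₃) with γ₁ = ψ₂, γ₂ = (ψ₂ + Δ⁻¹)/2, γ₃ = (ψ₂ − Δ⁻¹)/2; moreover γ₁ > γ₂ > γ₃ > 0. -/
open Real Polynomial


lemma aux_int (L s c : ℝ) (hL : 0 < L) (hc : 0 < c) :
    (2 * c ^ 2 * (∫ x in (-L)..L, (((x - s) ^ 2 + c ^ 2) ^ 2)⁻¹)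
        - (∫ x in (-L)..L, ((x - s) ^ 2 + c ^ 2)⁻¹)
      = (L - s) / ((L - s) ^ 2 + c ^ 2) - (-L - s) / ((-L - s) ^ 2 + c ^ 2)) ∧
    ((∫ x in (-L)..L, (x - s) * (((x - s) ^ 2 + c ^ 2) ^ 2)⁻¹)
      = (1 / 2) * (((-L - s) ^ 2 + c ^ 2)⁻¹ - ((L - s) ^ 2 + c ^ 2)⁻¹)) ∧
    (0 < ∫ x in (-L)..L, ((x - s) ^ 2 + c ^ 2)⁻¹) ∧
    (0 < ∫ x in (-L)..L, (((x - s) ^ 2 + c ^ 2) ^ 2)⁻¹) ∧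
    (∀ p t : ℝ, t ≠ 0 → 0 < p ^ 2 * c ^ 2 * (∫ x in (-L)..L, (((x - s) ^ 2 + c ^ 2) ^ 2)⁻¹)
      - 2 * p * t * c * (∫ x in (-L)..L, (x - s) * (((x - s) ^ 2 + c ^ 2) ^ 2)⁻¹)
      + t ^ 2 * ((∫ x in (-L)..L, ((x - s) ^ 2 + c ^ 2)⁻¹)
        - c ^ 2 * (∫ x in (-L)..L, (((x - s) ^ 2 + c ^ 2) ^ 2)⁻¹))) := by
  have hq : ∀ x : ℝ, 0 < (x - s) ^ 2 + c ^ 2 := fun x => by positivity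
  have hq0 : ∀ x : ℝ, (x - s) ^ 2 + c ^ 2 ≠ 0 := fun x => (hq x).ne'
  have hq2 : ∀ x : ℝ, ((x - s) ^ 2 + c ^ 2) ^ 2 ≠ 0 := fun x => pow_ne_zero 2 (hq0 x)
  have c2 : Continuous fun x : ℝ => ((x - s) ^ 2 + c ^ 2)⁻¹ :=
    Continuous.inv₀ (by fun_prop) hq0
  have c4 : Continuous fun x : ℝ => (((x - s) ^ 2 + c ^ 2) ^ 2)⁻¹ :=
    Continuous.inv₀ (by fun_prop) hq2
  have c3 : Continuous fun x : ℝ => (x - s) * (((x - s) ^ 2 + c ^ 2) ^ 2)⁻¹ :=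
    Continuous.mul (by fun_prop) c4
  have i2 := c2.intervalIntegrable (μ := MeasureTheory.volume) (-L) L
  have i3 := c3.intervalIntegrable (μ := MeasureTheory.volume) (-L) L
  have i4 := c4.intervalIntegrable (μ := MeasureTheory.volume) (-L) L
  have dq : ∀ x : ℝ, HasDerivAt (fun x : ℝ => (x - s) ^ 2 + c ^ 2) (2 * (x - s)) x := by
    intro x
    have := (((hasDerivAt_id x).sub_const s).pow 2).add_const (c ^ 2)
    exact this.congr_deriv (by simp)
  refine ⟨?_, ?_, ?_, ?_, ?_⟩
  · rw [← intervalIntegral.integral_const_mul, ← intervalIntegral.integral_sub (i4.const_mul _) i2]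
    refine intervalIntegral.integral_eq_sub_of_hasDerivAt
      (f := fun x : ℝ => (x - s) / ((x - s) ^ 2 + c ^ 2)) ?_ ((i4.const_mul _).sub i2)
    intro x _
    have h := ((hasDerivAt_id x).sub_const s).div (dq x) (hq0 x)
    refine h.congr_deriv ?_
    have := hq0 x
    simp only [id]
    field_simp
    ring
  · have h := intervalIntegral.integral_eq_sub_of_hasDerivAt (a := -L) (b := L)
      (f := fun x : ℝ => -(1 / 2) * ((x - s) ^ 2 + c ^ 2)⁻¹)
      (f' := fun x : ℝ => (x - s) * (((x - s) ^ 2 + c ^ 2) ^ 2)⁻¹) ?_ i3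
    · rw [h]; ring
    intro x _
    have h := ((dq x).inv (hq0 x)).const_mul (-(1 / 2))
    refine h.congr_deriv ?_
    have := hq0 x
    field_simp
  · exact intervalIntegral.intervalIntegral_pos_of_pos i2 (fun x => inv_pos.2 (hq x)) (by linarith)
  · exact intervalIntegral.intervalIntegral_pos_of_pos i4
      (fun x => inv_pos.2 (pow_pos (hq x) 2)) (by linarith)
  · intro p t ht
    have key : 0 < ∫ x in (-L)..L, (p * c - t * (x - s)) ^ 2 * (((x - s) ^ 2 + c ^ 2) ^ 2)⁻¹ := by
      have hp : ∀ x, p * c - t * (x - s) ≠ 0 →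
          0 < (p * c - t * (x - s)) ^ 2 * (((x - s) ^ 2 + c ^ 2) ^ 2)⁻¹ := fun x hx =>
        mul_pos (by positivity) (inv_pos.2 (pow_pos (hq x) 2))
      refine intervalIntegral.integral_pos (by linarith)
        (Continuous.mul (by fun_prop) c4).continuousOn (fun x _ => by positivity) ?_
      by_cases h : p * c - t * (L - s) = 0
      · refine ⟨-L, ⟨le_rfl, by linarith⟩, hp _ ?_⟩
        intro h'
        have : t * L = 0 := by linarith
        rcases mul_eq_zero.1 this with h1 | h1
        · exact ht h1
        · exact hL.ne' h1
      · exact ⟨L, ⟨by linarith, le_rfl⟩, hp _ h⟩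
    have e : (∫ x in (-L)..L, (p * c - t * (x - s)) ^ 2 * (((x - s) ^ 2 + c ^ 2) ^ 2)⁻¹) =
        ∫ x in (-L)..L, ((p ^ 2 * c ^ 2 * (((x - s) ^ 2 + c ^ 2) ^ 2)⁻¹
          - 2 * p * t * c * ((x - s) * (((x - s) ^ 2 + c ^ 2) ^ 2)⁻¹))
          + t ^ 2 * (((x - s) ^ 2 + c ^ 2)⁻¹ - c ^ 2 * (((x - s) ^ 2 + c ^ 2) ^ 2)⁻¹)) := by
      congr 1
      funext x
      have := hq0 x
      field_simp
      ring
    rw [e, intervalIntegral.integral_add ((i4.const_mul _).sub (i3.const_mul _))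
      ((i2.sub (i4.const_mul _)).const_mul _),
      intervalIntegral.integral_sub (i4.const_mul _) (i3.const_mul _),
      intervalIntegral.integral_const_mul, intervalIntegral.integral_const_mul,
      intervalIntegral.integral_const_mul,
      intervalIntegral.integral_sub i2 (i4.const_mul _),
      intervalIntegral.integral_const_mul] at key
    exact key

theorem charpoly_W3x3 (L D θ : ℝ) (hL : 0 < L) (hD : 0 < D)
    (hθ : θ ∈ Set.Ioo (-(π / 2)) (π / 2))
    (Ds Dc ψ₂ ψ₄ ψ₃' Δ γ₁ γ₂ γ₃ : ℝ)
    (hDs : Ds = D * sin θ) (hDc : Dc = D * cos θ)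
    (hψ₂ : ψ₂ = (1 / (2 * L)) * ∫ x in (-L)..L, ((x - Ds) ^ 2 + Dc ^ 2)⁻¹)
    (hψ₄ : ψ₄ = (1 / (2 * L)) * ∫ x in (-L)..L, (((x - Ds) ^ 2 + Dc ^ 2) ^ 2)⁻¹)
    (hψ₃' : ψ₃' = (1 / (2 * L)) * ∫ x in (-L)..L, (x - Ds) * (((x - Ds) ^ 2 + Dc ^ 2) ^ 2)⁻¹)
    (hΔ : Δ = Real.sqrt ((D ^ 2 - L ^ 2) ^ 2 + (2 * L * Dc) ^ 2))
    (hγ₁ : γ₁ = ψ₂) (hγ₂ : γ₂ = (ψ₂ + Δ⁻¹) / 2) (hγ₃ : γ₃ = (ψ₂ - Δ⁻¹) / 2)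
    (W : Matrix (Fin 3) (Fin 3) ℝ)
    (hW : W = !![ψ₂, 0, 0; 0, Dc ^ 2 * ψ₄, Dc * ψ₃'; 0, Dc * ψ₃', ψ₂ - Dc ^ 2 * ψ₄]) :
    W.charpoly = (X - C γ₁) * (X - C γ₂) * (X - C γ₃) ∧
      γ₁ > γ₂ ∧ γ₂ > γ₃ ∧ γ₃ > 0 := by
  have hcos : 0 < cos θ := cos_pos_of_mem_Ioo hθ
  have hc : 0 < Dc := by rw [hDc]; positivity
  have hDD : D ^ 2 = Ds ^ 2 + Dc ^ 2 := by
    rw [hDs, hDc]; linear_combination (-D ^ 2) * sin_sq_add_cos_sq θ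
  obtain ⟨h1, h2, h3, h4, h5⟩ := aux_int L Ds Dc hL hc
  generalize (∫ x in (-L)..L, ((x - Ds) ^ 2 + Dc ^ 2)⁻¹) = I2 at *
  generalize (∫ x in (-L)..L, (((x - Ds) ^ 2 + Dc ^ 2) ^ 2)⁻¹) = I4 at *
  generalize (∫ x in (-L)..L, (x - Ds) * (((x - Ds) ^ 2 + Dc ^ 2) ^ 2)⁻¹) = I3 at *
  have hR : 0 < (D ^ 2 - L ^ 2) ^ 2 + (2 * L * Dc) ^ 2 := by positivity
  have hΔ0 : 0 < Δ := by rw [hΔ]; exact sqrt_pos.2 hR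
  have hΔ2 : Δ ^ 2 = ((L - Ds) ^ 2 + Dc ^ 2) * ((-L - Ds) ^ 2 + Dc ^ 2) := by
    rw [hΔ, sq_sqrt hR.le, hDD]; ring
  have hψ2 : 0 < ψ₂ := by rw [hψ₂]; positivity
  have hA : 0 < Dc ^ 2 * ψ₄ := by rw [hψ₄]; positivity
  have key : (2 * (Dc ^ 2 * ψ₄) - ψ₂) ^ 2 + 4 * (Dc * ψ₃') ^ 2 = Δ⁻¹ ^ 2 := by
    have e1 : 2 * (Dc ^ 2 * ψ₄) - ψ₂ = (1 / (2 * L)) *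
        ((L - Ds) / ((L - Ds) ^ 2 + Dc ^ 2) - (-L - Ds) / ((-L - Ds) ^ 2 + Dc ^ 2)) := by
      rw [← h1, hψ₄, hψ₂]; ring
    have hqa : (L - Ds) ^ 2 + Dc ^ 2 ≠ 0 := by positivity
    have hqb : (-L - Ds) ^ 2 + Dc ^ 2 ≠ 0 := by positivity
    rw [e1, hψ₃', h2, inv_pow, hΔ2]
    field_simp
    ring
  have hdet : 0 < (Dc ^ 2 * ψ₄) * (ψ₂ - Dc ^ 2 * ψ₄) - (Dc * ψ₃') ^ 2 := by
    have h := mul_pos (show 0 < 1 / (2 * L) by positivity) (h5 (Dc * ψ₃') (Dc ^ 2 * ψ₄) hA.ne')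
    have e : (Dc ^ 2 * ψ₄) * ((Dc ^ 2 * ψ₄) * (ψ₂ - Dc ^ 2 * ψ₄) - (Dc * ψ₃') ^ 2) > 0 := by
      refine lt_of_lt_of_eq h ?_
      have e2 : I2 = 2 * L * ψ₂ := by rw [hψ₂]; field_simp
      have e3 : I3 = 2 * L * ψ₃' := by rw [hψ₃']; field_simp
      have e4 : I4 = 2 * L * ψ₄ := by rw [hψ₄]; field_simp
      rw [e2, e3, e4]
      field_simp
      ring
    exact (mul_pos_iff_of_pos_left hA).1 e
  have hi : 0 < Δ⁻¹ := inv_pos.2 hΔ0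
  have hlt : Δ⁻¹ < ψ₂ := by
    refine lt_of_pow_lt_pow_left₀ 2 hψ2.le ?_
    nlinarith
  refine ⟨?_, by linarith, by linarith, by linarith⟩
  have hs : γ₂ + γ₃ = ψ₂ := by rw [hγ₂, hγ₃]; ring
  have hm : γ₂ * γ₃ = (Dc ^ 2 * ψ₄) * (ψ₂ - Dc ^ 2 * ψ₄) - (Dc * ψ₃') ^ 2 := by
    rw [hγ₂, hγ₃]; linear_combination (1 / 4) * key
  have hs' := congrArg (C : ℝ → ℝ[X]) hs
  have hm' := congrArg (C : ℝ → ℝ[X]) hm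
  rw [hW, Matrix.charpoly, Matrix.det_fin_three, hγ₁]
  simp only [Matrix.charmatrix_apply, C_add, C_mul, C_sub, C_pow] at hs' hm' ⊢
  simp [Matrix.diagonal]
  linear_combination (X - C ψ₂) * (X * hs' - hm')
end

section
/- Let W be the real symmetric 3×3 matrix with rows (ψ₂, 0, 0), (0, D_c⁴·ψ₆, D_c³·ψ̄₅), (0, D_c³·ψ̄₅, D_c²·ψ₄ − D_c⁴·ψ₆). Then the characteristic polynomial of W factors as (X − γ₁)(X − γ₂)(X − γ₃) with γ₁ = ψ₂, γ₂ = (D_c²/2)·[ψ₄ + √((ψ₄ − 2 D_c² ψ₆)² + 4 D_c² ψ̄₅²)], γ₃ = (D_c²/2)·[ψ₄ − √((ψ₄ − 2 D_c² ψ₆)² + 4 D_c² ψ̄₅²)]; moreover γ₁ > γ₂ > γ₃ > 0. -/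
open Real Polynomial

lemma aux_q_pos (d c x : ℝ) (hc : 0 < c) : 0 < (x - d) ^ 2 + c ^ 2 := by positivity

lemma aux_cont (d c : ℝ) (hc : 0 < c) (n : ℕ) (p : ℝ → ℝ) (hp : Continuous p) :
    Continuous (fun x : ℝ => p x * (((x - d) ^ 2 + c ^ 2) ^ n)⁻¹) := by
  refine hp.mul (Continuous.inv₀ (by fun_prop) ?_)
  intro x
  exact (pow_pos (aux_q_pos d c x hc) n).ne'

lemma aux_cont1 (d c : ℝ) (hc : 0 < c) (n : ℕ) :
    Continuous (fun x : ℝ => (((x - d) ^ 2 + c ^ 2) ^ n)⁻¹) := by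
  simpa using aux_cont d c hc n (fun _ => 1) continuous_const

lemma aux_pos (L d c : ℝ) (hL : 0 < L) (hc : 0 < c) (n : ℕ) :
    0 < ∫ x in (-L)..L, (((x - d) ^ 2 + c ^ 2) ^ n)⁻¹ := by
  refine intervalIntegral.integral_pos (by linarith) (aux_cont1 d c hc n).continuousOn ?_ ?_
  · intro x _
    have := aux_q_pos d c x hc
    positivity
  · refine ⟨L, ⟨by linarith, le_rfl⟩, ?_⟩
    have := aux_q_pos d c L hc
    positivity

/-- trace bound -/
lemma aux_trace (L d c : ℝ) (hL : 0 < L) (hc : 0 < c) :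
    c ^ 2 * (∫ x in (-L)..L, (((x - d) ^ 2 + c ^ 2) ^ 2)⁻¹) ≤
      ∫ x in (-L)..L, ((x - d) ^ 2 + c ^ 2)⁻¹ := by
  rw [← intervalIntegral.integral_const_mul]
  have h1 := aux_cont1 d c hc 1
  simp only [pow_one] at h1
  refine intervalIntegral.integral_mono_on (by linarith)
    (((aux_cont1 d c hc 2).const_mul _).intervalIntegrable _ _) (h1.intervalIntegrable _ _) ?_
  intro x _
  have h := aux_q_pos d c x hc
  rw [← div_eq_mul_inv, div_le_iff₀ (by positivity)]
  have : ((x - d) ^ 2 + c ^ 2)⁻¹ * ((x - d) ^ 2 + c ^ 2) ^ 2 = (x - d) ^ 2 + c ^ 2 := by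
    field_simp
  rw [this]
  nlinarith [sq_nonneg (x - d)]

/-- strict Cauchy-Schwarz -/
lemma aux_cs (L d c A B E : ℝ) (hL : 0 < L) (hc : 0 < c)
    (hE : E = ∫ x in (-L)..L, (((x - d) ^ 2 + c ^ 2) ^ 2)⁻¹)
    (hA : A = ∫ x in (-L)..L, (((x - d) ^ 2 + c ^ 2) ^ 3)⁻¹)
    (hB : B = ∫ x in (-L)..L, (x - d) * (((x - d) ^ 2 + c ^ 2) ^ 3)⁻¹) :
    B ^ 2 < A * (E - c ^ 2 * A) := by
  have hApos : 0 < A := hA ▸ aux_pos L d c hL hc 3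
  have key : ∀ s : ℝ, 0 < (E - c ^ 2 * A) - 2 * s * B + s ^ 2 * A := by
    intro s
    have h0 : 0 < ∫ x in (-L)..L, (x - d - s) ^ 2 * (((x - d) ^ 2 + c ^ 2) ^ 3)⁻¹ := by
      refine intervalIntegral.integral_pos (by linarith)
        (aux_cont d c hc 3 (fun x => (x - d - s) ^ 2) (by fun_prop)).continuousOn ?_ ?_
      · intro x _
        have := aux_q_pos d c x hc
        positivity
      · by_cases h : L - d - s = 0
        · refine ⟨-L, ⟨le_rfl, by linarith⟩, ?_⟩
          have := aux_q_pos d c (-L) hc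
          have h2 : -L - d - s ≠ 0 := by intro h3; linarith
          positivity
        · refine ⟨L, ⟨by linarith, le_rfl⟩, ?_⟩
          have := aux_q_pos d c L hc
          positivity
    have h1 : (∫ x in (-L)..L, (x - d - s) ^ 2 * (((x - d) ^ 2 + c ^ 2) ^ 3)⁻¹) =
        ∫ x in (-L)..L, ((((x - d) ^ 2 + c ^ 2) ^ 2)⁻¹
          - (2 * s) * ((x - d) * (((x - d) ^ 2 + c ^ 2) ^ 3)⁻¹))
          + (s ^ 2 - c ^ 2) * (((x - d) ^ 2 + c ^ 2) ^ 3)⁻¹ := by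
      congr 1
      ext x
      have := aux_q_pos d c x hc
      field_simp
      ring
    have i2 := (aux_cont1 d c hc 2).intervalIntegrable (μ := MeasureTheory.volume) (-L) L
    have i3 := ((aux_cont1 d c hc 3).const_mul (s ^ 2 - c ^ 2)).intervalIntegrable
      (μ := MeasureTheory.volume) (-L) L
    have i5 := ((aux_cont d c hc 3 (fun x => x - d) (by fun_prop)).const_mul
      (2 * s)).intervalIntegrable (μ := MeasureTheory.volume) (-L) L
    rw [h1, intervalIntegral.integral_add (i2.sub i5) i3, intervalIntegral.integral_sub i2 i5,
      intervalIntegral.integral_const_mul, intervalIntegral.integral_const_mul,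
      ← hE, ← hA, ← hB] at h0
    linarith
  have h := key (B / A)
  have h2 : (E - c ^ 2 * A) - 2 * (B / A) * B + (B / A) ^ 2 * A
      = (A * (E - c ^ 2 * A) - B ^ 2) / A := by
    field_simp
    ring
  rw [h2] at h
  have := (div_pos_iff_of_pos_right hApos).1 h
  linarith

/-- nondegeneracy -/
lemma aux_nondeg (L d c A E : ℝ) (hL : 0 < L) (hc : 0 < c)
    (hE : E = ∫ x in (-L)..L, (((x - d) ^ 2 + c ^ 2) ^ 2)⁻¹)
    (hA : A = ∫ x in (-L)..L, (((x - d) ^ 2 + c ^ 2) ^ 3)⁻¹)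
    (hB : 0 = ∫ x in (-L)..L, (x - d) * (((x - d) ^ 2 + c ^ 2) ^ 3)⁻¹) :
    3 * E < 4 * c ^ 2 * A := by
  have hq : ∀ x : ℝ, HasDerivAt (fun x : ℝ => (x - d) ^ 2 + c ^ 2) (2 * (x - d)) x := by
    intro x
    have := (((hasDerivAt_id x).sub_const d).pow 2).add_const (c ^ 2)
    simpa using this
  have hd : d = 0 := by
    have h := intervalIntegral.integral_eq_sub_of_hasDerivAt (a := -L) (b := L)
      (f := fun x : ℝ => -(1 / 4) * (((x - d) ^ 2 + c ^ 2) ^ 2)⁻¹)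
      (f' := fun x : ℝ => (x - d) * (((x - d) ^ 2 + c ^ 2) ^ 3)⁻¹)
      (by
        intro x _
        have hx := aux_q_pos d c x hc
        have := ((((hq x).pow 2).inv (pow_pos hx 2).ne').const_mul (-(1 / 4)))
        refine this.congr_deriv ?_
        simp only [Pi.pow_apply]
        field_simp
        norm_num
        ring)
      ((aux_cont d c hc 3 (fun x => x - d) (by fun_prop)).intervalIntegrable _ _)
    rw [← hB] at h
    have h2 : (((L - d) ^ 2 + c ^ 2) ^ 2)⁻¹ = (((-L - d) ^ 2 + c ^ 2) ^ 2)⁻¹ := by linarith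
    have h3 := inv_injective h2
    have h4 := (pow_left_inj₀ (aux_q_pos d c L hc).le (aux_q_pos d c (-L) hc).le two_ne_zero).1 h3
    have h5 : L * d = 0 := by linarith
    exact (mul_eq_zero.1 h5).resolve_left hL.ne'
  subst hd
  have i2 := ((aux_cont1 0 c hc 2).const_mul 3).intervalIntegrable
    (μ := MeasureTheory.volume) (-L) L
  have i3 := ((aux_cont1 0 c hc 3).const_mul (4 * c ^ 2)).intervalIntegrable
      (μ := MeasureTheory.volume) (-L) L
  have h := intervalIntegral.integral_eq_sub_of_hasDerivAt (a := -L) (b := L)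
    (f := fun x : ℝ => (x - 0) * (((x - 0) ^ 2 + c ^ 2) ^ 2)⁻¹)
    (f' := fun x : ℝ => (4 * c ^ 2) * (((x - 0) ^ 2 + c ^ 2) ^ 3)⁻¹
      - 3 * (((x - 0) ^ 2 + c ^ 2) ^ 2)⁻¹)
    (by
      intro x _
      have hx := aux_q_pos 0 c x hc
      have := ((hasDerivAt_id x).sub_const 0).mul (((hq x).pow 2).inv (pow_pos hx 2).ne')
      refine this.congr_deriv ?_
      simp only [Pi.pow_apply, Pi.inv_apply, id]
      field_simp
      ring)
    (i3.sub i2)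
  rw [intervalIntegral.integral_sub i3 i2, intervalIntegral.integral_const_mul,
      intervalIntegral.integral_const_mul, ← hE, ← hA] at h
  have h6 : 0 < (L - 0) * (((L - 0) ^ 2 + c ^ 2) ^ 2)⁻¹ := by
    have := aux_q_pos 0 c L hc
    have : 0 < L - 0 := by linarith
    positivity
  have h7 : (-L - 0) * (((-L - 0) ^ 2 + c ^ 2) ^ 2)⁻¹
      = - ((L - 0) * (((L - 0) ^ 2 + c ^ 2) ^ 2)⁻¹) := by
    simp
  rw [h7] at h
  linarith

theorem charpoly_W2x3 (L D θ : ℝ) (hL : 0 < L) (hD : 0 < D)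
    (hθ : θ ∈ Set.Ioo (-(π / 2)) (π / 2))
    (Ds Dc ψ₂ ψ₄ ψ₆ ψ₅' γ₁ γ₂ γ₃ : ℝ)
    (hDs : Ds = D * sin θ) (hDc : Dc = D * cos θ)
    (hψ₂ : ψ₂ = (1 / (2 * L)) * ∫ x in (-L)..L, ((x - Ds) ^ 2 + Dc ^ 2)⁻¹)
    (hψ₄ : ψ₄ = (1 / (2 * L)) * ∫ x in (-L)..L, (((x - Ds) ^ 2 + Dc ^ 2) ^ 2)⁻¹)
    (hψ₆ : ψ₆ = (1 / (2 * L)) * ∫ x in (-L)..L, (((x - Ds) ^ 2 + Dc ^ 2) ^ 3)⁻¹)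
    (hψ₅' : ψ₅' = (1 / (2 * L)) * ∫ x in (-L)..L, (x - Ds) * (((x - Ds) ^ 2 + Dc ^ 2) ^ 3)⁻¹)
    (hγ₁ : γ₁ = ψ₂)
    (hγ₂ : γ₂ = (Dc ^ 2 / 2) *
      (ψ₄ + Real.sqrt ((ψ₄ - 2 * Dc ^ 2 * ψ₆) ^ 2 + 4 * Dc ^ 2 * ψ₅' ^ 2)))
    (hγ₃ : γ₃ = (Dc ^ 2 / 2) *
      (ψ₄ - Real.sqrt ((ψ₄ - 2 * Dc ^ 2 * ψ₆) ^ 2 + 4 * Dc ^ 2 * ψ₅' ^ 2)))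
    (W : Matrix (Fin 3) (Fin 3) ℝ)
    (hW : W = !![ψ₂, 0, 0; 0, Dc ^ 4 * ψ₆, Dc ^ 3 * ψ₅';
                 0, Dc ^ 3 * ψ₅', Dc ^ 2 * ψ₄ - Dc ^ 4 * ψ₆]) :
    W.charpoly = (X - C γ₁) * (X - C γ₂) * (X - C γ₃) ∧
      γ₁ > γ₂ ∧ γ₂ > γ₃ ∧ γ₃ > 0 := by
  have hc : 0 < Dc := by
    rw [hDc]
    exact mul_pos hD (cos_pos_of_mem_Ioo hθ)
  clear hDs hDc
  have hK : 0 < 1 / (2 * L) := by positivity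
  have f4 := aux_pos L Ds Dc hL hc 2
  have ft := aux_trace L Ds Dc hL hc
  have fcs := aux_cs L Ds Dc _ _ _ hL hc rfl rfl rfl
  have fnd := aux_nondeg L Ds Dc _ _ hL hc rfl rfl
  generalize (∫ x in (-L)..L, ((x - Ds) ^ 2 + Dc ^ 2)⁻¹) = I2 at *
  generalize (∫ x in (-L)..L, (((x - Ds) ^ 2 + Dc ^ 2) ^ 2)⁻¹) = I4 at *
  generalize (∫ x in (-L)..L, (((x - Ds) ^ 2 + Dc ^ 2) ^ 3)⁻¹) = I6 at *
  generalize (∫ x in (-L)..L, (x - Ds) * (((x - Ds) ^ 2 + Dc ^ 2) ^ 3)⁻¹) = I5 at *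
  generalize 1 / (2 * L) = K at *
  have g4 : 0 < ψ₄ := by rw [hψ₄]; positivity
  have gt : Dc ^ 2 * ψ₄ ≤ ψ₂ := by
    rw [hψ₄, hψ₂]
    nlinarith [mul_le_mul_of_nonneg_left ft hK.le]
  have gcs : ψ₅' ^ 2 < ψ₆ * (ψ₄ - Dc ^ 2 * ψ₆) := by
    rw [hψ₄, hψ₅', hψ₆]
    have := mul_lt_mul_of_pos_left fcs (pow_pos hK 2)
    linarith
  have gdisc : 0 < (ψ₄ - 2 * Dc ^ 2 * ψ₆) ^ 2 + 4 * Dc ^ 2 * ψ₅' ^ 2 := by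
    by_cases h5 : I5 = 0
    · have hf := mul_lt_mul_of_pos_left (fnd h5.symm) hK
      have h : ψ₄ - 2 * Dc ^ 2 * ψ₆ < 0 := by
        have : 3 * ψ₄ < 4 * Dc ^ 2 * ψ₆ := by rw [hψ₄, hψ₆]; linarith
        linarith
      have := h.ne
      positivity
    · have : ψ₅' ≠ 0 := by rw [hψ₅']; exact mul_ne_zero hK.ne' h5
      positivity
  have hS : 0 < Real.sqrt ((ψ₄ - 2 * Dc ^ 2 * ψ₆) ^ 2 + 4 * Dc ^ 2 * ψ₅' ^ 2) :=
    Real.sqrt_pos.2 gdisc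
  have hS2 := Real.sq_sqrt gdisc.le
  generalize Real.sqrt ((ψ₄ - 2 * Dc ^ 2 * ψ₆) ^ 2 + 4 * Dc ^ 2 * ψ₅' ^ 2) = S at *
  have hc2 : 0 < Dc ^ 2 := by positivity
  have hS4 : S < ψ₄ := by
    refine lt_of_pow_lt_pow_left₀ 2 g4.le ?_
    rw [hS2]
    have := mul_lt_mul_of_pos_left gcs hc2
    linarith
  refine ⟨?_, ?_, ?_, ?_⟩
  · have e1 : γ₂ + γ₃ = Dc ^ 2 * ψ₄ := by rw [hγ₂, hγ₃]; ring
    have e2 : γ₂ * γ₃ =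
        Dc ^ 4 * ψ₆ * (Dc ^ 2 * ψ₄ - Dc ^ 4 * ψ₆) - (Dc ^ 3 * ψ₅') ^ 2 := by
      have : γ₂ * γ₃ = Dc ^ 4 / 4 * (ψ₄ ^ 2 - S ^ 2) := by rw [hγ₂, hγ₃]; ring
      rw [this, hS2]; ring
    have E1 : (C γ₂ + C γ₃ : ℝ[X]) = C (Dc ^ 4 * ψ₆) + C (Dc ^ 2 * ψ₄ - Dc ^ 4 * ψ₆) := by
      rw [← C_add, ← C_add, e1]; congr 1; ring
    have E2 : (C γ₂ * C γ₃ : ℝ[X]) = C (Dc ^ 4 * ψ₆) * C (Dc ^ 2 * ψ₄ - Dc ^ 4 * ψ₆)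
        - C (Dc ^ 3 * ψ₅') ^ 2 := by
      rw [← C_mul, ← C_mul, ← C_pow, ← C_sub, e2]
    rw [hγ₁, hW, Matrix.charpoly, Matrix.det_fin_three]
    generalize Dc ^ 2 * ψ₄ - Dc ^ 4 * ψ₆ = w at *
    generalize Dc ^ 4 * ψ₆ = v at *
    generalize Dc ^ 3 * ψ₅' = z at *
    simp [Matrix.charmatrix_apply]
    linear_combination (X - C ψ₂) * X * E1 - (X - C ψ₂) * E2
  · rw [hγ₁, hγ₂]
    nlinarith [mul_lt_mul_of_pos_left hS4 hc2]
  · rw [hγ₂, hγ₃]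
    nlinarith [mul_pos hc2 hS]
  · rw [hγ₃]
    have : 0 < ψ₄ - S := by linarith
    positivity
end

section
/- Fix real numbers L > 0, D > 0 and an angle θ ∈ (−π/2, π/2). Then D_c²·ψ₆·(ψ₄ − D_c²·ψ₆) > D_c²·ψ̄₅². (Equivalently, the 2×2 real symmetric matrix (1/(2L)) ∫_{−L}^{L} r(x) r(x)ᵀ / ‖r(x)‖⁶ dx with r(x) = (D_c, x − D_s)ᵀ, whose entries are D_c² ψ₆, D_c ψ̄₅ and ψ₄ − D_c² ψ₆, is positive definite, so its determinant is positive.) -/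
open Real

theorem det_positive_2x2 (L D θ : ℝ) (hL : 0 < L) (hD : 0 < D)
    (hθ : θ ∈ Set.Ioo (-(π / 2)) (π / 2))
    (Ds Dc ψ₄ ψ₆ ψ₅' : ℝ)
    (hDs : Ds = D * sin θ) (hDc : Dc = D * cos θ)
    (hψ₄ : ψ₄ = (1 / (2 * L)) * ∫ x in (-L)..L, (((x - Ds) ^ 2 + Dc ^ 2) ^ 2)⁻¹)
    (hψ₆ : ψ₆ = (1 / (2 * L)) * ∫ x in (-L)..L, (((x - Ds) ^ 2 + Dc ^ 2) ^ 3)⁻¹)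
    (hψ₅' : ψ₅' = (1 / (2 * L)) * ∫ x in (-L)..L, (x - Ds) * (((x - Ds) ^ 2 + Dc ^ 2) ^ 3)⁻¹) :
    Dc ^ 2 * ψ₆ * (ψ₄ - Dc ^ 2 * ψ₆) > Dc ^ 2 * ψ₅' ^ 2 := by
  have hc : 0 < Dc := by
    rw [hDc]; exact mul_pos hD (cos_pos_of_mem_Ioo hθ)
  clear hDs hDc
  have hLL : -L < L := by linarith
  have hr : ∀ x : ℝ, 0 < (x - Ds) ^ 2 + Dc ^ 2 := fun x => by positivity
  have hg : Continuous fun x : ℝ => (((x - Ds) ^ 2 + Dc ^ 2) ^ 3)⁻¹ :=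
    Continuous.inv₀ (by fun_prop) fun x => (pow_pos (hr x) 3).ne'
  have hgp : ∀ x : ℝ, 0 < (((x - Ds) ^ 2 + Dc ^ 2) ^ 3)⁻¹ := fun x => inv_pos.2 (pow_pos (hr x) 3)
  have h4 : ∀ x : ℝ, (((x - Ds) ^ 2 + Dc ^ 2) ^ 2)⁻¹ =
      (x - Ds) ^ 2 * (((x - Ds) ^ 2 + Dc ^ 2) ^ 3)⁻¹
        + Dc ^ 2 * (((x - Ds) ^ 2 + Dc ^ 2) ^ 3)⁻¹ := fun x => by
    have := (hr x).ne'
    rw [← add_mul]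
    field_simp
  simp_rw [h4] at hψ₄
  generalize hgd : (fun x : ℝ => (((x - Ds) ^ 2 + Dc ^ 2) ^ 3)⁻¹) = g at hg
  have hge : ∀ x : ℝ, (((x - Ds) ^ 2 + Dc ^ 2) ^ 3)⁻¹ = g x := fun x => by rw [← hgd]
  simp_rw [hge] at hψ₄ hψ₅' hψ₆ hgp
  clear h4 hge hgd
  have i0 : IntervalIntegrable g MeasureTheory.volume (-L) L := hg.intervalIntegrable _ _
  have i1 : IntervalIntegrable (fun x => (x - Ds) * g x) MeasureTheory.volume (-L) L :=
    Continuous.intervalIntegrable (by fun_prop) _ _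
  have i2 : IntervalIntegrable (fun x => (x - Ds) ^ 2 * g x) MeasureTheory.volume (-L) L :=
    Continuous.intervalIntegrable (by fun_prop) _ _
  rw [intervalIntegral.integral_add i2 (i0.const_mul _),
    intervalIntegral.integral_const_mul] at hψ₄
  have hA : 0 < ∫ x in (-L)..L, g x :=
    intervalIntegral.integral_pos hLL hg.continuousOn (fun x _ => (hgp x).le)
      ⟨L, ⟨hLL.le, le_rfl⟩, hgp L⟩
  have key : ∀ a b : ℝ, 0 < a → 0 < a ^ 2 * (∫ x in (-L)..L, (x - Ds) ^ 2 * g x)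
      - 2 * a * b * (∫ x in (-L)..L, (x - Ds) * g x) + b ^ 2 * ∫ x in (-L)..L, g x := by
    intro a b ha
    have hpos : 0 < ∫ x in (-L)..L, (a * (x - Ds) - b) ^ 2 * g x := by
      refine intervalIntegral.integral_pos hLL (Continuous.continuousOn (by fun_prop))
        (fun x _ => mul_nonneg (sq_nonneg _) (hgp x).le) ?_
      by_cases h : a * (L - Ds) - b = 0
      · refine ⟨-L, ⟨le_rfl, hLL.le⟩, mul_pos (sq_pos_iff.2 ?_) (hgp _)⟩
        have : 0 < a * L := mul_pos ha hL
        intro h'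
        linarith
      · exact ⟨L, ⟨hLL.le, le_rfl⟩, mul_pos (sq_pos_iff.2 h) (hgp _)⟩
    rw [← intervalIntegral.integral_const_mul, ← intervalIntegral.integral_const_mul,
      ← intervalIntegral.integral_const_mul,
      ← intervalIntegral.integral_sub (i2.const_mul _) (i1.const_mul _),
      ← intervalIntegral.integral_add ((i2.const_mul _).sub (i1.const_mul _)) (i0.const_mul _)]
    convert hpos using 3
    ring
  have hk := key _ (∫ x in (-L)..L, (x - Ds) * g x) hA
  generalize (∫ x in (-L)..L, (x - Ds) * g x) = B at *
  generalize (∫ x in (-L)..L, (x - Ds) ^ 2 * g x) = C at *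
  generalize (∫ x in (-L)..L, g x) = A at *
  have h1 : 0 < A * C - B ^ 2 := by
    refine pos_of_mul_pos_right (a := A) ?_ hA.le
    linarith
  have h2 : 0 < Dc ^ 2 * (1 / (2 * L)) ^ 2 * (A * C - B ^ 2) := by positivity
  rw [hψ₄, hψ₅', hψ₆]
  linarith
end

section
/- Fix real numbers L > 0, D > 0 and an angle θ ∈ (−π/2, π/2). Then (1/2)·√((ψ₄ − 2 D_c² ψ₆)² + 4 D_c² ψ̄₅²) < ψ₄; equivalently, D_c² ψ̄₅² < (3/4)·ψ₄² + (ψ₄ − D_c² ψ₆)·D_c² ψ₆. -/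
open Real

theorem sqrt_lt_psi4 (L D θ : ℝ) (hL : 0 < L) (hD : 0 < D)
    (hθ : θ ∈ Set.Ioo (-(π / 2)) (π / 2))
    (Ds Dc ψ₄ ψ₆ ψ₅' : ℝ)
    (hDs : Ds = D * sin θ) (hDc : Dc = D * cos θ)
    (hψ₄ : ψ₄ = (1 / (2 * L)) * ∫ x in (-L)..L, (((x - Ds) ^ 2 + Dc ^ 2) ^ 2)⁻¹)
    (hψ₆ : ψ₆ = (1 / (2 * L)) * ∫ x in (-L)..L, (((x - Ds) ^ 2 + Dc ^ 2) ^ 3)⁻¹)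
    (hψ₅' : ψ₅' = (1 / (2 * L)) * ∫ x in (-L)..L, (x - Ds) * (((x - Ds) ^ 2 + Dc ^ 2) ^ 3)⁻¹) :
    (1 / 2) * Real.sqrt ((ψ₄ - 2 * Dc ^ 2 * ψ₆) ^ 2 + 4 * Dc ^ 2 * ψ₅' ^ 2) < ψ₄ ∧
      Dc ^ 2 * ψ₅' ^ 2 < (3 / 4) * ψ₄ ^ 2 + (ψ₄ - Dc ^ 2 * ψ₆) * (Dc ^ 2 * ψ₆) := by
  have hc : 0 < Dc := by
    rw [hDc]; exact mul_pos hD (cos_pos_of_mem_Ioo hθ)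
  have hr : ∀ x : ℝ, 0 < (x - Ds) ^ 2 + Dc ^ 2 := fun x => by positivity
  have c4 : Continuous fun x : ℝ => (((x - Ds) ^ 2 + Dc ^ 2) ^ 2)⁻¹ :=
    Continuous.inv₀ (by fun_prop) (fun x => (pow_pos (hr x) 2).ne')
  have c6 : Continuous fun x : ℝ => (((x - Ds) ^ 2 + Dc ^ 2) ^ 3)⁻¹ :=
    Continuous.inv₀ (by fun_prop) (fun x => (pow_pos (hr x) 3).ne')
  have c5 : Continuous fun x : ℝ => (x - Ds) * (((x - Ds) ^ 2 + Dc ^ 2) ^ 3)⁻¹ :=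
    Continuous.mul (by fun_prop) c6
  have hLL : -L < L := by linarith
  have hk : 0 < 1 / (2 * L) := by positivity
  have e : ∀ x : ℝ, (((x - Ds) ^ 2 + Dc ^ 2) ^ 2)⁻¹
      = ((x - Ds) ^ 2 + Dc ^ 2) * (((x - Ds) ^ 2 + Dc ^ 2) ^ 3)⁻¹ := fun x => by
    have := (hr x).ne'
    field_simp
  have p6 : ∀ x : ℝ, 0 < (((x - Ds) ^ 2 + Dc ^ 2) ^ 3)⁻¹ := fun x =>
    inv_pos.2 (pow_pos (hr x) 3)
  have h4 : 0 < ψ₄ := by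
    rw [hψ₄]
    refine mul_pos hk (intervalIntegral.intervalIntegral_pos_of_pos
      (c4.intervalIntegrable _ _) (fun x => inv_pos.2 (pow_pos (hr x) 2)) hLL)
  have h6 : 0 < ψ₆ := by
    rw [hψ₆]
    exact mul_pos hk (intervalIntegral.intervalIntegral_pos_of_pos
      (c6.intervalIntegrable _ _) p6 hLL)
  have key : ∀ (a : ℝ) (f : ℝ → ℝ), Continuous f →
      (∀ x, a * f x ≤ (((x - Ds) ^ 2 + Dc ^ 2) ^ 2)⁻¹) →
      a * ((1 / (2 * L)) * ∫ x in (-L)..L, f x) ≤ ψ₄ := by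
    intro a f hf h
    have := intervalIntegral.integral_mono hLL.le
      ((hf.const_mul a).intervalIntegrable (μ := MeasureTheory.volume) _ _)
      (c4.intervalIntegrable _ _) h
    rw [intervalIntegral.integral_const_mul] at this
    rw [hψ₄, mul_left_comm]
    exact mul_le_mul_of_nonneg_left this hk.le
  have i6 : Dc ^ 2 * ψ₆ ≤ ψ₄ := by
    rw [hψ₆]
    refine key _ _ c6 fun x => ?_
    rw [e x]
    exact mul_le_mul_of_nonneg_right (by nlinarith [sq_nonneg (x - Ds)]) (p6 x).le
  have i5 : (2 * Dc) * ψ₅' ≤ ψ₄ := by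
    rw [hψ₅']
    refine key _ _ c5 fun x => ?_
    rw [e x, ← mul_assoc]
    exact mul_le_mul_of_nonneg_right (by nlinarith [sq_nonneg (x - Ds - Dc)]) (p6 x).le
  have i5' : (-(2 * Dc)) * ψ₅' ≤ ψ₄ := by
    rw [hψ₅']
    refine key _ _ c5 fun x => ?_
    rw [e x, ← mul_assoc]
    exact mul_le_mul_of_nonneg_right (by nlinarith [sq_nonneg (x - Ds + Dc)]) (p6 x).le
  have s5 : 4 * (Dc ^ 2 * ψ₅' ^ 2) ≤ ψ₄ ^ 2 := by nlinarith
  have h6' : 0 < Dc ^ 2 * ψ₆ := by positivity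
  have second : Dc ^ 2 * ψ₅' ^ 2 < (3 / 4) * ψ₄ ^ 2 + (ψ₄ - Dc ^ 2 * ψ₆) * (Dc ^ 2 * ψ₆) := by
    have := mul_nonneg (sub_nonneg.2 i6) h6'.le
    have := pow_pos h4 2
    linarith
  refine ⟨?_, second⟩
  have : Real.sqrt ((ψ₄ - 2 * Dc ^ 2 * ψ₆) ^ 2 + 4 * Dc ^ 2 * ψ₅' ^ 2) < 2 * ψ₄ := by
    rw [Real.sqrt_lt' (by linarith)]
    nlinarith
  linarith
end

section
/- Let n ≥ 1, let γ : Fin n → ℝ satisfy γ i > 0 for all i, let c > 0 and P > 0 be real numbers. Then there exists a unique τ > 0 such that ∑_{i} max(τ − c/γ i, 0) = P. -/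
theorem waterfilling_exists_unique (n : ℕ) (hn : 1 ≤ n) (γ : Fin n → ℝ)
    (hγ : ∀ i, 0 < γ i) (c P : ℝ) (hc : 0 < c) (hP : 0 < P) :
    ∃! τ : ℝ, 0 < τ ∧ ∑ i, max (τ - c / γ i) 0 = P := by
  have hd : ∀ i, 0 < c / γ i := fun i => div_pos hc (hγ i)
  have key : ∀ a b : ℝ, a < b → ∑ i, max (a - c / γ i) 0 = P →
      ∑ i, max (b - c / γ i) 0 = P → False := by
    intro a b hab ha hb
    have hpos : ∃ i ∈ Finset.univ, 0 < max (a - c / γ i) 0 := by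
      by_contra! h
      have := Finset.sum_nonpos h
      linarith
    obtain ⟨i, hi, hi0⟩ := hpos
    have hlt : ∑ i, max (a - c / γ i) 0 < ∑ i, max (b - c / γ i) 0 := by
      refine Finset.sum_lt_sum (fun j _ => max_le_max (by linarith) le_rfl) ⟨i, hi, ?_⟩
      have h1 : 0 < a - c / γ i := by simpa using hi0
      rw [max_eq_left h1.le]
      exact lt_max_of_lt_left (by linarith)
    linarith
  have h0 : ∑ i, max ((0 : ℝ) - c / γ i) 0 = 0 :=
    Finset.sum_eq_zero fun i _ => max_eq_right (by linarith [hd i])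
  let i0 : Fin n := ⟨0, hn⟩
  have h1 : P ≤ ∑ i, max ((P + c / γ i0) - c / γ i) 0 := by
    have := Finset.single_le_sum (f := fun i => max ((P + c / γ i0) - c / γ i) 0)
      (fun i _ => le_max_right _ _) (Finset.mem_univ i0)
    refine le_trans ?_ this
    exact le_max_of_le_left (by linarith)
  have hcont : Continuous fun τ : ℝ => ∑ i, max (τ - c / γ i) 0 := by fun_prop
  obtain ⟨τ, hτ, hτP⟩ := intermediate_value_Icc (a := (0 : ℝ)) (b := P + c / γ i0)
    (by linarith [hd i0]) hcont.continuousOn ⟨h0.le.trans hP.le, h1⟩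
  refine ⟨τ, ⟨lt_of_le_of_ne hτ.1 ?_, hτP⟩, ?_⟩
  · rintro rfl
    simp only at hτP
    linarith
  · rintro y ⟨_, hy⟩
    rcases lt_trichotomy y τ with h | h | h
    · exact (key _ _ h hy hτP).elim
    · exact h
    · exact (key _ _ h hτP hy).elim
end

section
/- Fix θ ∈ (−π/2, π/2). For ε ∈ (0,1) define F(ε) = (π/(4·ψ₂(ε)·ε²)) · (ψ₂(ε)·Δ(ε) − 1)/(ψ₂(ε)·Δ(ε) + 1). Then F(ε) − (π/12)·cos²θ = O(ε²) as ε → 0⁺. -/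
open Real Filter Asymptotics Topology

noncomputable def ψ₂ (θ ε : ℝ) : ℝ :=
  (1 / (2 * ε)) * ∫ x in (-ε)..ε, ((x - sin θ) ^ 2 + cos θ ^ 2)⁻¹

noncomputable def Δ (θ ε : ℝ) : ℝ :=
  Real.sqrt ((1 - ε ^ 2) ^ 2 + (2 * ε * cos θ) ^ 2)

lemma aux_pt (s c x : ℝ) (h : s ^ 2 + c ^ 2 = 1) (hx : |x| ≤ 1 / 16) :
    |((x - s) ^ 2 + c ^ 2)⁻¹ - (1 + 2 * s * x + (4 * s ^ 2 - 1) * x ^ 2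
      + (8 * s ^ 3 - 4 * s) * x ^ 3)| ≤ 64 * x ^ 4 := by
  have hs : |s| ≤ 1 := by
    rw [abs_le]; constructor <;> nlinarith [sq_nonneg c]
  have hq : (x - s) ^ 2 + c ^ 2 = 1 - 2 * x * s + x ^ 2 := by nlinarith
  have hxs : |x * s| ≤ 1 / 16 := by
    rw [abs_mul]; nlinarith [abs_nonneg x, abs_nonneg s]
  have hq2 : 1 / 2 ≤ 1 - 2 * x * s + x ^ 2 := by
    nlinarith [(abs_le.mp hxs).2, sq_nonneg x]
  rw [hq]
  have hqp : 0 < 1 - 2 * x * s + x ^ 2 := by linarith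
  have e : (1 - 2 * x * s + x ^ 2)⁻¹ - (1 + 2 * s * x + (4 * s ^ 2 - 1) * x ^ 2
      + (8 * s ^ 3 - 4 * s) * x ^ 3)
      = x ^ 4 * (((16 * s ^ 4 - 12 * s ^ 2 + 1) - (8 * s ^ 3 - 4 * s) * x)
        / (1 - 2 * x * s + x ^ 2)) := by
    field_simp
    ring
  have h2 : s ^ 2 ≤ 1 := by nlinarith [sq_nonneg c]
  have h3 : |(8 * s ^ 3 - 4 * s) * x| ≤ 1 := by
    have : |8 * s ^ 3 - 4 * s| ≤ 12 := by
      have : 8 * s ^ 3 - 4 * s = s * (8 * s ^ 2 - 4) := by ring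
      rw [this, abs_mul]
      have : |8 * s ^ 2 - 4| ≤ 12 := by
        rw [abs_le]; constructor <;> nlinarith [sq_nonneg s]
      nlinarith [abs_nonneg s, abs_nonneg (8 * s ^ 2 - 4)]
    rw [abs_mul]
    nlinarith [abs_nonneg x, abs_nonneg (8 * s ^ 3 - 4 * s)]
  have h4 : |(16 * s ^ 4 - 12 * s ^ 2 + 1) - (8 * s ^ 3 - 4 * s) * x| ≤ 32 := by
    have := abs_le.mp h3
    have h5 : s ^ 4 ≤ 1 := by nlinarith [sq_nonneg s]
    have h6 : 0 ≤ s ^ 4 := by positivity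
    rw [abs_le]; constructor <;> nlinarith [sq_nonneg s]
  rw [e, abs_mul, abs_of_nonneg (by positivity : (0:ℝ) ≤ x ^ 4), abs_div, abs_of_pos hqp, mul_comm]
  apply mul_le_mul_of_nonneg_right _ (by positivity)
  rw [div_le_iff₀ hqp]
  linarith

lemma aux_psi (θ ε : ℝ) (h0 : 0 < ε) (h1 : ε ≤ 1 / 16) :
    |ψ₂ θ ε - (1 + (4 * sin θ ^ 2 - 1) / 3 * ε ^ 2)| ≤ 64 * ε ^ 4 := by
  have hsc := sin_sq_add_cos_sq θ
  set s := sin θ with hs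
  set c := cos θ with hc
  have hbound : ∀ x ∈ Set.uIoc (-ε) ε, ‖((x - s) ^ 2 + c ^ 2)⁻¹ - (1 + 2 * s * x
      + (4 * s ^ 2 - 1) * x ^ 2 + (8 * s ^ 3 - 4 * s) * x ^ 3)‖ ≤ 64 * ε ^ 4 := by
    intro x hx
    rw [Set.uIoc_of_le (by linarith)] at hx
    have hxa : |x| ≤ ε := abs_le.mpr ⟨hx.1.le, hx.2⟩
    have := aux_pt s c x hsc (hxa.trans h1)
    rw [Real.norm_eq_abs]
    refine this.trans ?_
    have h4 : x ^ 4 = |x| ^ 4 := by rw [← abs_pow, abs_of_nonneg (by positivity)]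
    rw [h4]
    gcongr
  have hI := intervalIntegral.norm_integral_le_of_norm_le_const hbound
  have hcont : IntervalIntegrable (fun x : ℝ => ((x - s) ^ 2 + c ^ 2)⁻¹)
      MeasureTheory.volume (-ε) ε := by
    apply ContinuousOn.intervalIntegrable
    apply ContinuousOn.inv₀ (by fun_prop)
    intro x hx
    rw [Set.uIcc_of_le (by linarith)] at hx
    have hs1 : |s| ≤ 1 := abs_sin_le_one θ
    have := abs_le.mp hs1
    have : (x - s) ^ 2 + c ^ 2 = (1 - x) ^ 2 + 2 * x * (1 - s) := by nlinarith
    have h' : (x - s) ^ 2 + c ^ 2 = (1 + x) ^ 2 - 2 * x * (1 + s) := by nlinarith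
    apply ne_of_gt
    rcases le_total 0 x with hx0 | hx0
    · rw [this]; nlinarith [hx.2]
    · rw [h']; nlinarith [hx.1]
  have hpoly : ∫ x in (-ε)..ε, (1 + 2 * s * x + (4 * s ^ 2 - 1) * x ^ 2
      + (8 * s ^ 3 - 4 * s) * x ^ 3) = 2 * ε * (1 + (4 * s ^ 2 - 1) / 3 * ε ^ 2) := by
    have hd : ∀ x ∈ Set.uIcc (-ε) ε, HasDerivAt (fun x : ℝ => x + s * x ^ 2
        + (4 * s ^ 2 - 1) / 3 * x ^ 3 + (8 * s ^ 3 - 4 * s) / 4 * x ^ 4)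
        (1 + 2 * s * x + (4 * s ^ 2 - 1) * x ^ 2 + (8 * s ^ 3 - 4 * s) * x ^ 3) x := by
      intro x _
      have := (((hasDerivAt_id x).add ((hasDerivAt_pow 2 x).const_mul s)).add
        ((hasDerivAt_pow 3 x).const_mul ((4 * s ^ 2 - 1) / 3))).add
        ((hasDerivAt_pow 4 x).const_mul ((8 * s ^ 3 - 4 * s) / 4))
      refine this.congr_deriv ?_
      push_cast
      ring
    rw [intervalIntegral.integral_eq_sub_of_hasDerivAt hd
      (Continuous.intervalIntegrable (by fun_prop) _ _)]
    ring
  rw [intervalIntegral.integral_sub hcont (Continuous.intervalIntegrable (by fun_prop) _ _),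
    hpoly, Real.norm_eq_abs, abs_of_pos (by linarith : 0 < ε - -ε)] at hI
  have e : ψ₂ θ ε - (1 + (4 * s ^ 2 - 1) / 3 * ε ^ 2) = ((∫ x in (-ε)..ε,
      ((x - s) ^ 2 + c ^ 2)⁻¹) - 2 * ε * (1 + (4 * s ^ 2 - 1) / 3 * ε ^ 2)) / (2 * ε) := by
    unfold ψ₂
    rw [← hs, ← hc]
    generalize (∫ x in (-ε)..ε, ((x - s) ^ 2 + c ^ 2)⁻¹) = J
    field_simp
  rw [e, abs_div, abs_of_pos (by linarith : 0 < 2 * ε), div_le_iff₀ (by linarith)]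
  linarith

lemma aux_delta (θ ε : ℝ) (h0 : 0 < ε) (h1 : ε ≤ 1 / 16) :
    |Δ θ ε - (1 + (2 * cos θ ^ 2 - 1) * ε ^ 2)| ≤ 2 * ε ^ 4 := by
  have hsq : Δ θ ε ^ 2 = (1 - ε ^ 2) ^ 2 + (2 * ε * cos θ) ^ 2 := by
    unfold Δ; exact Real.sq_sqrt (by positivity)
  have hn : 0 ≤ Δ θ ε := Real.sqrt_nonneg _
  have hc : cos θ ^ 2 ≤ 1 := cos_sq_le_one θ
  have hc0 := sq_nonneg (cos θ)
  set b := 2 * cos θ ^ 2 - 1 with hb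
  have hb1 : |b| ≤ 1 := abs_le.mpr ⟨by linarith, by linarith⟩
  have hb2 : b ^ 2 ≤ 1 := by rw [← sq_abs]; nlinarith [abs_nonneg b]
  have he : ε ^ 2 ≤ 1 / 256 := by nlinarith
  have hB : 1 / 2 ≤ 1 + b * ε ^ 2 := by nlinarith [(abs_le.mp hb1).1, sq_nonneg ε]
  have hprod : (Δ θ ε - (1 + b * ε ^ 2)) * (Δ θ ε + (1 + b * ε ^ 2)) = (1 - b ^ 2) * ε ^ 4 := by
    have : (Δ θ ε - (1 + b * ε ^ 2)) * (Δ θ ε + (1 + b * ε ^ 2))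
      = Δ θ ε ^ 2 - (1 + b * ε ^ 2) ^ 2 := by ring
    rw [this, hsq, hb]; ring
  have hp : 0 < Δ θ ε + (1 + b * ε ^ 2) := by linarith
  have h2 : |Δ θ ε - (1 + b * ε ^ 2)| * (Δ θ ε + (1 + b * ε ^ 2)) = (1 - b ^ 2) * ε ^ 4 := by
    rw [← abs_of_pos hp, ← abs_mul, hprod, abs_of_nonneg]
    have : 0 ≤ 1 - b ^ 2 := by linarith
    positivity
  have h4 : 0 ≤ ε ^ 4 := by positivity
  nlinarith [abs_nonneg (Δ θ ε - (1 + b * ε ^ 2)), mul_nonneg (sq_nonneg b) h4]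

lemma aux_mul {x y A B : ℝ} (hx : |x| ≤ A) (hy : |y| ≤ B) : |x * y| ≤ A * B := by
  rw [abs_mul]
  exact mul_le_mul hx hy (abs_nonneg _) ((abs_nonneg _).trans hx)

lemma aux_main (a b k p d t : ℝ) (hk : a + b = k) (ha : |a| ≤ 1) (hb : |b| ≤ 1)
    (hk1 : |k| ≤ 1) (hp : |p| ≤ 64) (hd : |d| ≤ 2) (ht0 : 0 < t) (ht : t ≤ 1 / 256) :
    |π / (4 * (1 + a * t + p * t ^ 2) * t) *
      (((1 + a * t + p * t ^ 2) * (1 + b * t + d * t ^ 2) - 1) /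
        ((1 + a * t + p * t ^ 2) * (1 + b * t + d * t ^ 2) + 1)) - π / 8 * k| ≤ 1000 * π * t := by
  have hta : |t| ≤ 1 / 256 := by rwa [abs_of_pos ht0]
  have hpt : |p * t| ≤ 64 * (1 / 256) := aux_mul hp hta
  have hdt : |d * t| ≤ 2 * (1 / 256) := aux_mul hd hta
  have hat : |a * t| ≤ 1 * (1 / 256) := aux_mul ha hta
  have hbt : |b * t| ≤ 1 * (1 / 256) := aux_mul hb hta
  have hptt : |p * t * t| ≤ 64 * (1 / 256) * (1 / 256) := aux_mul hpt hta
  have hdtt : |d * t * t| ≤ 2 * (1 / 256) * (1 / 256) := aux_mul hdt hta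
  set ψ := 1 + a * t + p * t ^ 2 with hψ
  set D := 1 + b * t + d * t ^ 2 with hD
  have hψ' : ψ = 1 + a * t + p * t * t := by rw [hψ]; ring
  have hD' : D = 1 + b * t + d * t * t := by rw [hD]; ring
  rw [abs_le] at hat hbt hptt hdtt
  have hψ1 : 1 / 2 ≤ ψ := by rw [hψ']; linarith
  have hψ2 : |ψ| ≤ 2 := by rw [hψ', abs_le]; constructor <;> linarith
  have hD1 : 1 / 2 ≤ D := by rw [hD']; linarith
  obtain ⟨r, hr⟩ : ∃ r, r = a * b + p + d + (a * (d * t) + b * (p * t)) + (p * t) * (d * t) :=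
    ⟨_, rfl⟩
  have hr1 : |r| ≤ 80 := by
    have e1 := abs_le.mp (aux_mul ha hb)
    have e2 := abs_le.mp (aux_mul ha hdt)
    have e3 := abs_le.mp (aux_mul hb hpt)
    have e4 := abs_le.mp (aux_mul hpt hdt)
    have e5 := abs_le.mp hp
    have e6 := abs_le.mp hd
    rw [hr, abs_le]; constructor <;> linarith
  have hprod : ψ * D - 1 = t * (k + t * r) := by
    rw [hψ, hD, hr, ← hk]; ring
  have hpos : 0 < ψ * D := by apply mul_pos <;> linarith
  have hψ0 : 0 < ψ := by linarith
  obtain ⟨N, hN⟩ : ∃ N, N = 2 * r - 2 * (k * (a + p * t)) - k * (ψ * (k + t * r)) := ⟨_, rfl⟩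
  have hN1 : |N| ≤ 400 := by
    have e0 : |a + p * t| ≤ 2 := (abs_add_le _ _).trans (by linarith)
    have e1 := abs_le.mp (aux_mul hk1 e0)
    have e2 : |k + t * r| ≤ 2 := (abs_add_le _ _).trans (by linarith [aux_mul hta hr1])
    have e3 := abs_le.mp (aux_mul hk1 (aux_mul hψ2 e2))
    have e4 := abs_le.mp hr1
    rw [hN, abs_le]; constructor <;> linarith
  have e : π / (4 * ψ * t) * ((ψ * D - 1) / (ψ * D + 1)) - π / 8 * k
      = π * t * (N / (8 * ψ * (ψ * D + 1))) := by
    have hne : ψ * D + 1 ≠ 0 := by positivity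
    have h2 : ψ * D + 1 = 2 + t * (k + t * r) := by linarith
    have hNN : 2 * (k + t * r) - k * ψ * (ψ * D + 1) = t * N := by
      rw [h2, hN]
      have : ψ - 1 = t * (a + p * t) := by rw [hψ]; ring
      linear_combination (-2 * k) * this
    have : π * t * (N / (8 * ψ * (ψ * D + 1))) = π * ((t * N) / (8 * ψ * (ψ * D + 1))) := by ring
    rw [this, ← hNN, hprod]
    generalize ψ * D + 1 = Q at *
    field_simp
    ring
  rw [e, abs_mul, abs_of_pos (by positivity : 0 < π * t)]
  have hden : 4 ≤ 8 * ψ * (ψ * D + 1) := by nlinarith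
  have : |N / (8 * ψ * (ψ * D + 1))| ≤ 1000 := by
    rw [abs_div, abs_of_pos (by linarith : 0 < 8 * ψ * (ψ * D + 1)), div_le_iff₀ (by linarith)]
    linarith
  calc π * t * |N / (8 * ψ * (ψ * D + 1))| ≤ π * t * 1000 := by gcongr
    _ = _ := by ring

theorem snr_threshold1_3x3_asymptotics (θ : ℝ) (hθ : θ ∈ Set.Ioo (-(π / 2)) (π / 2)) :
    (fun ε : ℝ =>
        (π / (4 * ψ₂ θ ε * ε ^ 2)) *
            ((ψ₂ θ ε * Δ θ ε - 1) / (ψ₂ θ ε * Δ θ ε + 1)) -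
          (π / 12) * cos θ ^ 2) =O[𝓝[>] (0 : ℝ)] fun ε => ε ^ 2 := by
  apply IsBigO.of_bound (1000 * π)
  filter_upwards [Ioc_mem_nhdsGT (by norm_num : (0:ℝ) < 1 / 16)] with ε hε
  obtain ⟨h0, h1⟩ := hε
  have hp := aux_psi θ ε h0 h1
  have hd := aux_delta θ ε h0 h1
  have hsc := sin_sq_add_cos_sq θ
  have hs0 := sq_nonneg (sin θ)
  have hc0 := sq_nonneg (cos θ)
  have h4 : 0 < ε ^ 4 := by positivity
  have hm := aux_main ((4 * sin θ ^ 2 - 1) / 3) (2 * cos θ ^ 2 - 1) (2 / 3 * cos θ ^ 2)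
    ((ψ₂ θ ε - (1 + (4 * sin θ ^ 2 - 1) / 3 * ε ^ 2)) / ε ^ 4)
    ((Δ θ ε - (1 + (2 * cos θ ^ 2 - 1) * ε ^ 2)) / ε ^ 4) (ε ^ 2)
    (by linarith) (abs_le.mpr ⟨by linarith, by linarith⟩)
    (abs_le.mpr ⟨by linarith, by linarith⟩) (abs_le.mpr ⟨by linarith, by linarith⟩)
    (by rw [abs_div, abs_of_pos h4, div_le_iff₀ h4]; exact hp)
    (by rw [abs_div, abs_of_pos h4, div_le_iff₀ h4]; exact hd)
    (by positivity) (by nlinarith)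
  have e1 : 1 + (4 * sin θ ^ 2 - 1) / 3 * ε ^ 2 +
    ((ψ₂ θ ε - (1 + (4 * sin θ ^ 2 - 1) / 3 * ε ^ 2)) / ε ^ 4) * (ε ^ 2) ^ 2 = ψ₂ θ ε := by
    field_simp
    ring
  have e2 : 1 + (2 * cos θ ^ 2 - 1) * ε ^ 2 +
    ((Δ θ ε - (1 + (2 * cos θ ^ 2 - 1) * ε ^ 2)) / ε ^ 4) * (ε ^ 2) ^ 2 = Δ θ ε := by
    field_simp
    ring
  rw [e1, e2] at hm
  rw [Real.norm_eq_abs, Real.norm_eq_abs, abs_of_pos (by positivity : 0 < ε ^ 2)]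
  have e3 : π / 12 * cos θ ^ 2 = π / 8 * (2 / 3 * cos θ ^ 2) := by ring
  rw [e3]
  exact hm
end

section
/- Fix θ ∈ (−π/2, π/2). For ε ∈ (0,1) define S(ε) = ψ₂(ε)·[ψ₄(ε) − √((ψ₄(ε) − 2 cos²θ·ψ₆(ε))² + 4 cos²θ·ψ̄₅(ε)²)] / (2 cos⁴θ·[ψ₆(ε)·(ψ₄(ε) − cos²θ·ψ₆(ε)) − ψ̄₅(ε)²]) − 1 and F(ε) = (π/(4·ψ₂(ε)·ε²))·S(ε). Then F(ε) − (π/4)·[ tan²θ·ε⁻² − (4 cos⁴θ − 16 cos²θ + 10)/(3 cos²θ) ] = O(ε²) as ε → 0⁺. -/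
open Real Filter Asymptotics Topology

noncomputable def ψ₄ (θ ε : ℝ) : ℝ :=
  (1 / (2 * ε)) * ∫ x in (-ε)..ε, (((x - sin θ) ^ 2 + cos θ ^ 2) ^ 2)⁻¹

noncomputable def ψ₆ (θ ε : ℝ) : ℝ :=
  (1 / (2 * ε)) * ∫ x in (-ε)..ε, (((x - sin θ) ^ 2 + cos θ ^ 2) ^ 3)⁻¹

noncomputable def ψ₅' (θ ε : ℝ) : ℝ :=
  (1 / (2 * ε)) * ∫ x in (-ε)..ε, (x - sin θ) * (((x - sin θ) ^ 2 + cos θ ^ 2) ^ 3)⁻¹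

/-- Cubic expansion at `0` with a continuous remainder factor. -/
def CubicExp (f : ℝ → ℝ) (a b c d : ℝ) : Prop :=
  ∃ g : ℝ → ℝ, Continuous g ∧ ∀ x, f x = a + b * x + c * x ^ 2 + d * x ^ 3 + x ^ 4 * g x

lemma CubicExp.mul {f f' : ℝ → ℝ} {a b c d a' b' c' d' : ℝ} (h : CubicExp f a b c d)
    (h' : CubicExp f' a' b' c' d') :
    CubicExp (fun x => f x * f' x) (a * a') (a * b' + b * a') (a * c' + b * b' + c * a')
      (a * d' + b * c' + c * b' + d * a') := by
  obtain ⟨g, hg, hf⟩ := h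
  obtain ⟨g', hg', hf'⟩ := h'
  refine ⟨fun x => (b * d' + c * c' + d * b') + (c * d' + d * c') * x + d * d' * x ^ 2
    + (a + b * x + c * x ^ 2 + d * x ^ 3) * g' x + (a' + b' * x + c' * x ^ 2 + d' * x ^ 3) * g x
    + x ^ 4 * g x * g' x, by fun_prop, fun x => ?_⟩
  simp only [hf x, hf' x]
  ring

lemma q_pos {θ : ℝ} (hc : 0 < cos θ) (x : ℝ) : 0 < (x - sin θ) ^ 2 + cos θ ^ 2 := by positivity

lemma cubicExp_inv {θ : ℝ} (hc : 0 < cos θ) :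
    CubicExp (fun x => ((x - sin θ) ^ 2 + cos θ ^ 2)⁻¹) 1 (2 * sin θ) (4 * sin θ ^ 2 - 1)
      (8 * sin θ ^ 3 - 4 * sin θ) := by
  refine ⟨fun x => (-(4 * sin θ ^ 2 - 1) + 2 * sin θ * (8 * sin θ ^ 3 - 4 * sin θ)
    - (8 * sin θ ^ 3 - 4 * sin θ) * x) * ((x - sin θ) ^ 2 + cos θ ^ 2)⁻¹, ?_, fun x => ?_⟩
  · have : Continuous fun x : ℝ => ((x - sin θ) ^ 2 + cos θ ^ 2)⁻¹ :=
      Continuous.inv₀ (by fun_prop) (fun x => (q_pos hc x).ne')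
    fun_prop
  · have h1 : (x - sin θ) ^ 2 + cos θ ^ 2 = 1 - 2 * sin θ * x + x ^ 2 := by
      have := sin_sq_add_cos_sq θ
      linear_combination this
    have h2 := (q_pos hc x).ne'
    simp only [h1] at h2 ⊢
    field_simp
    ring

/-- Expansion `a + b ε² + O(ε⁴)` as `ε → 0⁺`. -/
def Exp2 (f : ℝ → ℝ) (a b : ℝ) : Prop :=
  (fun ε : ℝ => f ε - (a + b * ε ^ 2)) =O[𝓝[>] (0 : ℝ)] fun ε => ε ^ 4

lemma CubicExp.avg {f : ℝ → ℝ} {a b c d : ℝ} (h : CubicExp f a b c d) :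
    Exp2 (fun ε => (1 / (2 * ε)) * ∫ x in (-ε)..ε, f x) a (c / 3) := by
  obtain ⟨g, hg, hf⟩ := h
  obtain ⟨M, hM⟩ := (isCompact_Icc (a := (-1 : ℝ)) (b := 1)).exists_bound_of_continuousOn
    hg.continuousOn
  refine IsBigO.of_bound M ?_
  have h1 : ∀ᶠ ε in 𝓝[>] (0 : ℝ), ε < 1 :=
    (eventually_lt_nhds one_pos).filter_mono nhdsWithin_le_nhds
  filter_upwards [h1, self_mem_nhdsWithin] with ε he1 he0
  have he0 : 0 < ε := he0
  have hI : ∫ x in (-ε)..ε, f x = 2 * a * ε + 2 * c / 3 * ε ^ 3 + ∫ x in (-ε)..ε, x ^ 4 * g x := by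
    have : ∀ x, f x = (a + b * x + c * x ^ 2 + d * x ^ 3) + x ^ 4 * g x := hf
    simp only [this]
    rw [intervalIntegral.integral_add (Continuous.intervalIntegrable (by fun_prop) _ _)
      (Continuous.intervalIntegrable (by fun_prop) _ _)]
    congr 1
    rw [intervalIntegral.integral_add (Continuous.intervalIntegrable (by fun_prop) _ _)
      (Continuous.intervalIntegrable (by fun_prop) _ _),
      intervalIntegral.integral_add (Continuous.intervalIntegrable (by fun_prop) _ _)
      (Continuous.intervalIntegrable (by fun_prop) _ _),
      intervalIntegral.integral_add (Continuous.intervalIntegrable (by fun_prop) _ _)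
      (Continuous.intervalIntegrable (by fun_prop) _ _)]
    have hb : ∫ x in (-ε)..ε, b * x = 0 := by
      have := intervalIntegral.integral_const_mul (a := -ε) (b := ε) (μ := MeasureTheory.volume)
        b (fun x : ℝ => x)
      rw [this, integral_id]
      ring
    rw [hb]
    simp only [intervalIntegral.integral_const_mul, intervalIntegral.integral_const, integral_pow,
      smul_eq_mul]
    norm_num
    ring
  have hB : ‖∫ x in (-ε)..ε, x ^ 4 * g x‖ ≤ (ε ^ 4 * M) * |ε - (-ε)| := by
    apply intervalIntegral.norm_integral_le_of_norm_le_const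
    intro x hx
    rw [Set.uIoc_of_le (by linarith)] at hx
    have hx' : |x| ≤ ε := abs_le.2 ⟨hx.1.le, hx.2⟩
    have := hM x ⟨by linarith [hx.1], by linarith [hx.2]⟩
    rw [norm_mul, norm_pow, Real.norm_eq_abs]
    gcongr
  have hE : (1 / (2 * ε)) * (∫ x in (-ε)..ε, f x) - (a + c / 3 * ε ^ 2)
      = (1 / (2 * ε)) * ∫ x in (-ε)..ε, x ^ 4 * g x := by
    rw [hI]; field_simp; ring
  rw [hE, norm_mul, norm_pow, Real.norm_eq_abs, Real.norm_eq_abs ε, abs_of_pos he0,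
    abs_of_pos (by positivity)]
  rw [show ε - -ε = 2 * ε by ring, abs_of_pos (by positivity : 0 < 2 * ε)] at hB
  calc _ ≤ 1 / (2 * ε) * (ε ^ 4 * M * (2 * ε)) := by gcongr
    _ = M * ε ^ 4 := by field_simp

lemma exp2_poly_isBigO (a b : ℝ) :
    (fun ε : ℝ => a + b * ε ^ 2) =O[𝓝[>] (0 : ℝ)] fun _ => (1 : ℝ) := by
  have : Continuous fun ε : ℝ => a + b * ε ^ 2 := by fun_prop
  exact ((this.tendsto 0).mono_left nhdsWithin_le_nhds).isBigO_one ℝ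

lemma pow4_tendsto : Tendsto (fun ε : ℝ => ε ^ 4) (𝓝[>] (0 : ℝ)) (𝓝 0) := by
  have : Continuous fun ε : ℝ => ε ^ 4 := by fun_prop
  simpa using (this.tendsto 0).mono_left nhdsWithin_le_nhds

lemma Exp2.tendsto {f : ℝ → ℝ} {a b : ℝ} (h : Exp2 f a b) :
    Tendsto f (𝓝[>] (0 : ℝ)) (𝓝 a) := by
  have h1 := IsBigO.trans_tendsto h pow4_tendsto
  have : Continuous fun ε : ℝ => a + b * ε ^ 2 := by fun_prop
  have h2 := (this.tendsto 0).mono_left (nhdsWithin_le_nhds (s := Set.Ioi 0))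
  simpa using h1.add h2

lemma Exp2.congr_coef {f : ℝ → ℝ} {a b a' b' : ℝ} (h : Exp2 f a b) (ha : a = a') (hb : b = b') :
    Exp2 f a' b' := ha ▸ hb ▸ h

lemma exp2_const (k : ℝ) : Exp2 (fun _ => k) k 0 := by
  simpa [Exp2] using isBigO_zero _ _

lemma Exp2.add {f g : ℝ → ℝ} {a b a' b' : ℝ} (h : Exp2 f a b) (h' : Exp2 g a' b') :
    Exp2 (fun ε => f ε + g ε) (a + a') (b + b') := by
  refine (IsBigO.add h h').congr_left fun ε => ?_
  ring

lemma Exp2.sub {f g : ℝ → ℝ} {a b a' b' : ℝ} (h : Exp2 f a b) (h' : Exp2 g a' b') :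
    Exp2 (fun ε => f ε - g ε) (a - a') (b - b') := by
  refine (IsBigO.sub h h').congr_left fun ε => ?_
  ring

lemma Exp2.mul {f g : ℝ → ℝ} {a b a' b' : ℝ} (h : Exp2 f a b) (h' : Exp2 g a' b') :
    Exp2 (fun ε => f ε * g ε) (a * a') (a * b' + b * a') := by
  have h1 := IsBigO.mul h (h'.tendsto.isBigO_one ℝ)
  have h2 := IsBigO.mul (exp2_poly_isBigO a b) h'
  have h3 : (fun ε : ℝ => b * b' * ε ^ 4) =O[𝓝[>] (0 : ℝ)] fun ε => ε ^ 4 :=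
    (isBigO_refl _ _).const_mul_left _
  simp only [one_mul, mul_one] at h1 h2
  refine ((h1.add h2).add h3).congr_left fun ε => ?_
  ring

lemma exp2_poly (a b : ℝ) : Exp2 (fun ε => a + b * ε ^ 2) a b := by
  simpa [Exp2] using isBigO_zero _ _

lemma Exp2.inv {f : ℝ → ℝ} {a b : ℝ} (h : Exp2 f a b) (ha : a ≠ 0) :
    Exp2 (fun ε => (f ε)⁻¹) a⁻¹ (-b / a ^ 2) := by
  have h1 := ((exp2_const 1).sub (h.mul (exp2_poly a⁻¹ (-b / a ^ 2)))).congr_coef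
    (a' := 0) (b' := 0) (by field_simp; ring) (by field_simp; ring)
  have h2 := IsBigO.mul h1 ((h.tendsto.inv₀ ha).isBigO_one ℝ)
  simp only [mul_one] at h2
  refine h2.congr' ?_ EventuallyEq.rfl
  filter_upwards [h.tendsto.eventually_ne ha] with ε he
  field_simp
  ring

lemma Exp2.sqrt {f : ℝ → ℝ} {b : ℝ} (h : Exp2 f 1 b) (h0 : ∀ ε, 0 ≤ f ε) :
    Exp2 (fun ε => Real.sqrt (f ε)) 1 (b / 2) := by
  have hp := exp2_poly 1 (b / 2)
  have h1 := (h.sub (hp.mul hp)).congr_coef (a' := 0) (b' := 0) (by ring) (by ring)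
  have ht : Tendsto (fun ε => Real.sqrt (f ε) + (1 + b / 2 * ε ^ 2)) (𝓝[>] (0 : ℝ)) (𝓝 2) := by
    have := h.tendsto.sqrt.add hp.tendsto
    norm_num at this
    exact this
  have h2 := IsBigO.mul h1 ((ht.inv₀ two_ne_zero).isBigO_one ℝ)
  simp only [mul_one] at h2
  refine h2.congr' ?_ EventuallyEq.rfl
  filter_upwards [ht.eventually_ne two_ne_zero] with ε he
  rw [← div_eq_mul_inv, div_eq_iff he]
  have := Real.sq_sqrt (h0 ε)
  linear_combination -this

theorem snr_threshold1_2x3_asymptotics (θ : ℝ) (hθ : θ ∈ Set.Ioo (-(π / 2)) (π / 2))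
    (S F : ℝ → ℝ)
    (hS : ∀ ε, S ε =
      ψ₂ θ ε *
          (ψ₄ θ ε -
            Real.sqrt ((ψ₄ θ ε - 2 * cos θ ^ 2 * ψ₆ θ ε) ^ 2 +
              4 * cos θ ^ 2 * ψ₅' θ ε ^ 2)) /
        (2 * cos θ ^ 4 *
          (ψ₆ θ ε * (ψ₄ θ ε - cos θ ^ 2 * ψ₆ θ ε) - ψ₅' θ ε ^ 2)) - 1)
    (hF : ∀ ε, F ε = (π / (4 * ψ₂ θ ε * ε ^ 2)) * S ε) :
    (fun ε : ℝ =>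
        F ε -
          (π / 4) * (tan θ ^ 2 * (ε ^ 2)⁻¹ -
            (4 * cos θ ^ 4 - 16 * cos θ ^ 2 + 10) / (3 * cos θ ^ 2)))
      =O[𝓝[>] (0 : ℝ)] fun ε => ε ^ 2 := by
  have hc : 0 < cos θ := cos_pos_of_mem_Ioo hθ
  have hsc := sin_sq_add_cos_sq θ
  have hs2 : sin θ ^ 2 = 1 - cos θ ^ 2 := by linarith
  have c1 := cubicExp_inv hc
  have c2 := c1.mul c1
  have c3 := c2.mul c1
  have cu : CubicExp (fun x => x - sin θ) (-sin θ) 1 0 0 :=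
    ⟨fun _ => 0, continuous_const, fun x => by ring⟩
  have c5 := cu.mul c3
  have e2 : Exp2 (ψ₂ θ) 1 ((3 - 4 * cos θ ^ 2) / 3) :=
    c1.avg.congr_coef rfl (by linear_combination (4 / 3) * hs2)
  have e4 : Exp2 (ψ₄ θ) 1 ((10 - 12 * cos θ ^ 2) / 3) := by
    have : ψ₄ θ = fun ε => (1 / (2 * ε)) * ∫ x in (-ε)..ε,
        ((x - sin θ) ^ 2 + cos θ ^ 2)⁻¹ * ((x - sin θ) ^ 2 + cos θ ^ 2)⁻¹ := by
      funext ε; unfold ψ₄; simp only [inv_pow, ← pow_two]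
    rw [this]
    exact c2.avg.congr_coef (by ring) (by linear_combination 4 * hs2)
  have e6 : Exp2 (ψ₆ θ) 1 (8 * sin θ ^ 2 - 1) := by
    have : ψ₆ θ = fun ε => (1 / (2 * ε)) * ∫ x in (-ε)..ε,
        ((x - sin θ) ^ 2 + cos θ ^ 2)⁻¹ * ((x - sin θ) ^ 2 + cos θ ^ 2)⁻¹
          * ((x - sin θ) ^ 2 + cos θ ^ 2)⁻¹ := by
      funext ε; unfold ψ₆; simp only [← inv_pow, ← pow_two, ← pow_succ]
    rw [this]
    exact c3.avg.congr_coef (by ring) (by ring)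
  have e5 : Exp2 (ψ₅' θ) (-sin θ) (3 * sin θ - 8 * sin θ ^ 3) := by
    have : ψ₅' θ = fun ε => (1 / (2 * ε)) * ∫ x in (-ε)..ε, (x - sin θ) *
        (((x - sin θ) ^ 2 + cos θ ^ 2)⁻¹ * ((x - sin θ) ^ 2 + cos θ ^ 2)⁻¹
          * ((x - sin θ) ^ 2 + cos θ ^ 2)⁻¹) := by
      funext ε; unfold ψ₅'; simp only [← inv_pow, ← pow_two, ← pow_succ]
    rw [this]
    exact c5.avg.congr_coef (by ring) (by ring)
  have eΔ : Exp2 (fun ε => ψ₆ θ ε * (ψ₄ θ ε - cos θ ^ 2 * ψ₆ θ ε) - ψ₅' θ ε * ψ₅' θ ε)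
      0 (1 / 3) := by
    refine ((e6.mul (e4.sub ((exp2_const (cos θ ^ 2)).mul e6))).sub (e5.mul e5)).congr_coef ?_ ?_
    · linear_combination -hsc
    · have h4 : sin θ ^ 4 = (1 - cos θ ^ 2) ^ 2 := by rw [← hs2]; ring
      ring_nf
      rw [h4, hs2]
      ring
  have eR2 : Exp2 (fun ε => (ψ₄ θ ε - 2 * cos θ ^ 2 * ψ₆ θ ε) ^ 2 +
      4 * cos θ ^ 2 * ψ₅' θ ε ^ 2) 1 (2 * ((10 - 12 * cos θ ^ 2) / 3) - 4 * cos θ ^ 2 / 3) := by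
    have := ((e4.mul e4).sub ((exp2_const (4 * cos θ ^ 2)).mul eΔ)).congr_coef
      (a' := 1) (b' := 2 * ((10 - 12 * cos θ ^ 2) / 3) - 4 * cos θ ^ 2 / 3) (by ring) (by ring)
    refine IsBigO.congr_left this fun ε => ?_
    ring
  have eR := eR2.sqrt (fun ε => by positivity)
  have eD := e4.add eR
  have eG := ((exp2_const (2 / cos θ ^ 2)).mul (eD.inv (by norm_num))).sub (e2.inv one_ne_zero)
  have eG' := eG.congr_coef (a' := tan θ ^ 2)
    (b' := -((4 * cos θ ^ 4 - 16 * cos θ ^ 2 + 10) / (3 * cos θ ^ 2)))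
    (by rw [tan_eq_sin_div_cos, div_pow, hs2]; field_simp; ring) (by field_simp; ring)
  -- the determinant does not vanish for small `ε`
  have hΔ : ∀ᶠ ε in 𝓝[>] (0 : ℝ),
      ψ₆ θ ε * (ψ₄ θ ε - cos θ ^ 2 * ψ₆ θ ε) - ψ₅' θ ε ^ 2 ≠ 0 := by
    obtain ⟨C, hC⟩ := IsBigO.bound eΔ
    have ht : Tendsto (fun ε : ℝ => C * ε ^ 2) (𝓝[>] (0 : ℝ)) (𝓝 0) := by
      have : Continuous fun ε : ℝ => C * ε ^ 2 := by fun_prop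
      simpa using (this.tendsto 0).mono_left nhdsWithin_le_nhds
    filter_upwards [hC, self_mem_nhdsWithin,
      ht.eventually_lt_const (by norm_num : (0 : ℝ) < 1 / 3)] with ε h1 h2 h3 h4
    have h2 : 0 < ε := h2
    rw [← pow_two, h4, Real.norm_eq_abs, Real.norm_eq_abs, abs_of_pos (by positivity : 0 < ε ^ 4),
      show (0 : ℝ) - (0 + 1 / 3 * ε ^ 2) = -(1 / 3 * ε ^ 2) by ring, abs_neg,
      abs_of_pos (by positivity)] at h1
    have : C * ε ^ 2 * ε ^ 2 < 1 / 3 * ε ^ 2 := by gcongr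
    nlinarith
  have hfin := (IsBigO.mul (isBigO_refl (fun ε : ℝ => (ε ^ 2)⁻¹) (𝓝[>] 0)) eG').const_mul_left
    (π / 4)
  refine hfin.congr' ?_ ?_
  · filter_upwards [hΔ, self_mem_nhdsWithin, e2.tendsto.eventually_ne one_ne_zero,
      eD.tendsto.eventually_ne (show (1 + 1 : ℝ) ≠ 0 by norm_num)] with ε h1 h2 h3 h4
    have h2 : ε ≠ 0 := (show 0 < ε from h2).ne'
    rw [hF, hS]
    have hsq := Real.sq_sqrt (show 0 ≤ (ψ₄ θ ε - 2 * cos θ ^ 2 * ψ₆ θ ε) ^ 2 +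
              4 * cos θ ^ 2 * ψ₅' θ ε ^ 2 by positivity)
    set R := Real.sqrt ((ψ₄ θ ε - 2 * cos θ ^ 2 * ψ₆ θ ε) ^ 2 +
              4 * cos θ ^ 2 * ψ₅' θ ε ^ 2) with hR
    have key : ψ₂ θ ε * (ψ₄ θ ε - R) / (2 * cos θ ^ 4 *
          (ψ₆ θ ε * (ψ₄ θ ε - cos θ ^ 2 * ψ₆ θ ε) - ψ₅' θ ε ^ 2))
        = ψ₂ θ ε * (2 / cos θ ^ 2 * (ψ₄ θ ε + R)⁻¹) := by
      have hc' := hc.ne'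
      rw [div_eq_iff (by positivity)]
      have : ψ₄ θ ε - R = 4 * cos θ ^ 2 *
          (ψ₆ θ ε * (ψ₄ θ ε - cos θ ^ 2 * ψ₆ θ ε) - ψ₅' θ ε ^ 2) * (ψ₄ θ ε + R)⁻¹ := by
        rw [← div_eq_mul_inv, eq_div_iff h4]
        linear_combination -hsq
      rw [this]
      field_simp
      ring
    rw [key]
    generalize 2 / cos θ ^ 2 * (ψ₄ θ ε + R)⁻¹ = Z
    generalize (4 * cos θ ^ 4 - 16 * cos θ ^ 2 + 10) / (3 * cos θ ^ 2) = K
    field_simp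
    ring
  · filter_upwards [self_mem_nhdsWithin] with ε h2
    have h2 : ε ≠ 0 := (show 0 < ε from h2).ne'
    field_simp
end

section
/- Fix θ ∈ (−π/2, π/2). For ε ∈ (0,1) define S(ε) = ψ₂(ε)·[ψ₄(ε) + 3·√((ψ₄(ε) − 2 cos²θ·ψ₆(ε))² + 4 cos²θ·ψ̄₅(ε)²)] / (2 cos⁴θ·[ψ₆(ε)·(ψ₄(ε) − cos²θ·ψ₆(ε)) − ψ̄₅(ε)²]) − 1 and G(ε) = (π/(4·ψ₂(ε)·ε²))·S(ε). Let B₁ = (5 cos⁴θ − 177 cos²θ + 128)/60 and B₂ = (−350 cos⁶θ + 10242 cos⁴θ − 19311 cos²θ + 10122)/1575. Then G(ε) − (3π/(2 cos⁴θ))·(ε⁻⁴ − 2·B₁·ε⁻² + B₂) = O(ε²) as ε → 0⁺. -/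
open Real Filter Asymptotics Topology

/-- `f` has the even expansion `a₀ + a₁ ε² + a₂ ε⁴ + a₃ ε⁶ + O(ε⁸)` as `ε → 0⁺`. -/
def HasE (f : ℝ → ℝ) (a₀ a₁ a₂ a₃ : ℝ) : Prop :=
  (fun ε => f ε - (a₀ + a₁ * ε^2 + a₂ * ε^4 + a₃ * ε^6)) =O[𝓝[>] (0 : ℝ)] fun ε => ε^8

lemma tendsto_of_cont {p : ℝ → ℝ} (hp : Continuous p) {a : ℝ} (h : p 0 = a) :
    Tendsto p (𝓝[>] (0 : ℝ)) (𝓝 a) := by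
  rw [← h]
  exact hp.continuousAt.tendsto.mono_left nhdsWithin_le_nhds

lemma HasE.tendsto {f : ℝ → ℝ} {a₀ a₁ a₂ a₃ : ℝ} (h : HasE f a₀ a₁ a₂ a₃) :
    Tendsto f (𝓝[>] (0 : ℝ)) (𝓝 a₀) := by
  have h1 : Tendsto (fun ε : ℝ => ε^8) (𝓝[>] (0 : ℝ)) (𝓝 0) :=
    tendsto_of_cont (by fun_prop) (by norm_num)
  have h2 := h.trans_tendsto h1
  have h3 : Tendsto (fun ε : ℝ => a₀ + a₁ * ε^2 + a₂ * ε^4 + a₃ * ε^6) (𝓝[>] (0 : ℝ)) (𝓝 a₀) :=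
    tendsto_of_cont (by fun_prop) (by simp)
  simpa using h2.add h3

lemma hasE_congr {f g : ℝ → ℝ} {a₀ a₁ a₂ a₃ b₀ b₁ b₂ b₃ : ℝ} (h : HasE f a₀ a₁ a₂ a₃)
    (hfg : ∀ ε, g ε = f ε) (h0 : b₀ = a₀) (h1 : b₁ = a₁) (h2 : b₂ = a₂) (h3 : b₃ = a₃) :
    HasE g b₀ b₁ b₂ b₃ := by
  have : g = f := funext hfg
  subst this h0 h1 h2 h3
  exact h

lemma hasE_poly (a₀ a₁ a₂ a₃ : ℝ) :
    HasE (fun ε => a₀ + a₁ * ε^2 + a₂ * ε^4 + a₃ * ε^6) a₀ a₁ a₂ a₃ := by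
  unfold HasE
  simp only [sub_self]
  exact isBigO_zero _ _

lemma HasE.add {f g : ℝ → ℝ} {a₀ a₁ a₂ a₃ b₀ b₁ b₂ b₃ : ℝ} (hf : HasE f a₀ a₁ a₂ a₃)
    (hg : HasE g b₀ b₁ b₂ b₃) :
    HasE (fun ε => f ε + g ε) (a₀ + b₀) (a₁ + b₁) (a₂ + b₂) (a₃ + b₃) := by
  unfold HasE at *
  refine (IsBigO.add hf hg).congr_left fun ε => ?_
  ring

lemma HasE.smul {f : ℝ → ℝ} {a₀ a₁ a₂ a₃ : ℝ} (k : ℝ) (hf : HasE f a₀ a₁ a₂ a₃) :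
    HasE (fun ε => k * f ε) (k * a₀) (k * a₁) (k * a₂) (k * a₃) := by
  unfold HasE at *
  refine (hf.const_mul_left k).congr_left fun ε => ?_
  ring

lemma HasE.mul {f g : ℝ → ℝ} {a₀ a₁ a₂ a₃ b₀ b₁ b₂ b₃ : ℝ} (hf : HasE f a₀ a₁ a₂ a₃)
    (hg : HasE g b₀ b₁ b₂ b₃) :
    HasE (fun ε => f ε * g ε) (a₀ * b₀) (a₀ * b₁ + a₁ * b₀) (a₀ * b₂ + a₁ * b₁ + a₂ * b₀)
      (a₀ * b₃ + a₁ * b₂ + a₂ * b₁ + a₃ * b₀) := by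
  have hgb := hg.tendsto.isBigO_one ℝ
  have hpb := ((hasE_poly a₀ a₁ a₂ a₃).tendsto).isBigO_one ℝ
  have h3 : (fun ε : ℝ => (a₁ * b₃ + a₂ * b₂ + a₃ * b₁) + (a₂ * b₃ + a₃ * b₂) * ε^2
      + a₃ * b₃ * ε^4) =O[𝓝[>] (0 : ℝ)] fun _ => (1 : ℝ) :=
    (tendsto_of_cont (by fun_prop) rfl).isBigO_one ℝ
  have h4 := (isBigO_refl (fun ε : ℝ => ε^8) (𝓝[>] (0 : ℝ))).mul h3
  unfold HasE at *
  have h1 := hf.mul hgb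
  have h2 := hg.mul hpb
  simp only [mul_one] at h1 h2 h4
  refine ((h1.add h2).add h4).congr_left fun ε => ?_
  ring

lemma HasE.sqrt {f : ℝ → ℝ} {a₁ a₂ a₃ : ℝ} (hf : HasE f 1 a₁ a₂ a₃) :
    HasE (fun ε => Real.sqrt (f ε)) 1 (a₁/2) ((a₂ - (a₁/2)^2)/2)
      ((a₃ - 2 * (a₁/2) * ((a₂ - (a₁/2)^2)/2))/2) := by
  set b₁ := a₁/2 with hb₁
  set b₂ := (a₂ - b₁^2)/2 with hb₂
  set b₃ := (a₃ - 2 * b₁ * b₂)/2 with hb₃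
  have hp := hasE_poly 1 b₁ b₂ b₃
  have hpp := hp.mul hp
  have hd : HasE (fun ε => f ε + (-1) * ((1 + b₁ * ε^2 + b₂ * ε^4 + b₃ * ε^6) *
      (1 + b₁ * ε^2 + b₂ * ε^4 + b₃ * ε^6))) 0 0 0 0 := by
    refine hasE_congr (hf.add (hpp.smul (-1))) (fun _ => rfl) ?_ ?_ ?_ ?_
    · norm_num
    · rw [hb₁]; ring
    · rw [hb₂]; ring
    · rw [hb₃]; ring
  have hsum : Tendsto (fun ε => Real.sqrt (f ε) + (1 + b₁ * ε^2 + b₂ * ε^4 + b₃ * ε^6))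
      (𝓝[>] (0 : ℝ)) (𝓝 2) := by
    have := (hf.tendsto.sqrt).add hp.tendsto
    rw [Real.sqrt_one] at this
    norm_num at this
    exact this
  have hinv := (hsum.inv₀ two_ne_zero).isBigO_one ℝ
  have hne := hsum.eventually_ne two_ne_zero
  have hpos : ∀ᶠ ε in 𝓝[>] (0 : ℝ), 0 < f ε := hf.tendsto.eventually (lt_mem_nhds one_pos)
  unfold HasE at *
  have h1 := hd.mul hinv
  simp only [mul_one] at h1
  refine h1.congr' ?_ EventuallyEq.rfl
  filter_upwards [hne, hpos] with ε h2 h3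
  rw [← div_eq_mul_inv, div_eq_iff h2]
  have := Real.mul_self_sqrt h3.le
  linear_combination -this

lemma hasE_avg (f h : ℝ → ℝ) (p0 p1 p2 p3 p4 p5 p6 p7 : ℝ) (hh : Continuous h)
    (hf : ∀ x, f x = p0 + p1 * x + p2 * x^2 + p3 * x^3 + p4 * x^4 + p5 * x^5 + p6 * x^6
      + p7 * x^7 + x^8 * h x) :
    HasE (fun ε => (1 / (2 * ε)) * ∫ x in (-ε)..ε, f x) p0 (p2/3) (p4/5) (p6/7) := by
  obtain ⟨K, hK⟩ := (isCompact_Icc (a := (-1 : ℝ)) (b := 1)).exists_bound_of_continuousOn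
    hh.continuousOn
  unfold HasE
  refine IsBigO.of_bound K ?_
  have hmem : Set.Ioo (0 : ℝ) 1 ∈ 𝓝[>] (0 : ℝ) := Ioo_mem_nhdsGT one_pos
  filter_upwards [hmem] with ε hε
  have he := hε.1
  have e1 : ∫ x in (-ε)..ε, f x = (2 * ε) * (p0 + p2/3 * ε^2 + p4/5 * ε^4 + p6/7 * ε^6)
      + ∫ x in (-ε)..ε, x^8 * h x := by
    simp only [hf]
    rw [intervalIntegral.integral_add (Continuous.intervalIntegrable (by fun_prop) _ _)
      (Continuous.intervalIntegrable (by fun_prop) _ _)]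
    congr 1
    have hder : ∀ x ∈ Set.uIcc (-ε) ε, HasDerivAt (fun x : ℝ => p0 * x + p1 * x^2 / 2
        + p2 * x^3 / 3 + p3 * x^4 / 4 + p4 * x^5 / 5 + p5 * x^6 / 6 + p6 * x^7 / 7
        + p7 * x^8 / 8) (p0 + p1 * x + p2 * x^2 + p3 * x^3 + p4 * x^4 + p5 * x^5 + p6 * x^6
        + p7 * x^7) x := by
      intro x _
      have hm : ∀ (n : ℕ) (p : ℝ), HasDerivAt (fun x : ℝ => p * x^(n+1) / (n+1)) (p * x^n) x := by
        intro n p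
        have h0 := ((hasDerivAt_pow (n+1) x).const_mul p).div_const ((n : ℝ)+1)
        have hn : (n : ℝ) + 1 ≠ 0 := by positivity
        refine h0.congr_deriv ?_
        simp only [Nat.add_sub_cancel]
        push_cast
        field_simp
      have := (((((((hm 0 p0).add (hm 1 p1)).add (hm 2 p2)).add (hm 3 p3)).add (hm 4 p4)).add
        (hm 5 p5)).add (hm 6 p6)).add (hm 7 p7)
      refine HasDerivAt.congr_of_eventuallyEq (this.congr_deriv (by ring))
        (Eventually.of_forall fun y => ?_)
      simp only [Pi.add_apply]
      norm_num
    rw [intervalIntegral.integral_eq_sub_of_hasDerivAt hder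
      (Continuous.intervalIntegrable (by fun_prop) _ _)]
    ring
  have e2 : ‖∫ x in (-ε)..ε, x^8 * h x‖ ≤ (ε^8 * K) * |ε - (-ε)| := by
    refine intervalIntegral.norm_integral_le_of_norm_le_const fun x hx => ?_
    rw [Set.uIoc_of_le (by linarith)] at hx
    have hx1 : |x| ≤ ε := abs_le.2 ⟨hx.1.le, hx.2⟩
    have hx2 := hK x ⟨by linarith [hx.1, hε.2], by linarith [hx.2, hε.2]⟩
    rw [norm_mul, norm_pow, Real.norm_eq_abs]
    gcongr
  rw [e1]
  have e3 : (1 / (2 * ε)) * ((2 * ε) * (p0 + p2/3 * ε^2 + p4/5 * ε^4 + p6/7 * ε^6)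
      + ∫ x in (-ε)..ε, x^8 * h x) - (p0 + p2/3 * ε^2 + p4/5 * ε^4 + p6/7 * ε^6)
      = (1 / (2 * ε)) * ∫ x in (-ε)..ε, x^8 * h x := by
    field_simp
    ring
  rw [e3, norm_mul]
  have e4 : ‖1 / (2 * ε)‖ = 1 / (2 * ε) := Real.norm_of_nonneg (by positivity)
  have e5 : ‖ε^8‖ = ε^8 := Real.norm_of_nonneg (by positivity)
  have e6 : |ε - (-ε)| = 2 * ε := by
    rw [abs_of_pos (by linarith)]; ring
  rw [e6] at e2
  rw [e4, e5]
  calc 1 / (2 * ε) * ‖∫ x in (-ε)..ε, x^8 * h x‖ ≤ 1 / (2 * ε) * ((ε^8 * K) * (2 * ε)) := by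
        gcongr
    _ = K * ε^8 := by field_simp

lemma exp_2 (s c : ℝ) (hc : 0 < c) (h : c^2 = 1 - s^2) :
    HasE (fun ε => (1 / (2 * ε)) * ∫ x in (-ε)..ε, ((x - s)^2 + c^2)⁻¹)
      ((1)*s^0)
      (((-1)*s^0 + (4)*s^2)/3)
      (((1)*s^0 + (-12)*s^2 + (16)*s^4)/5)
      (((-1)*s^0 + (24)*s^2 + (-80)*s^4 + (64)*s^6)/7) := by
  have hq : ∀ x : ℝ, (x - s)^2 + c^2 ≠ 0 := fun x => by positivity
  refine hasE_avg _ (fun x => (((1)*s^0 + (-40)*s^2 + (240)*s^4 + (-448)*s^6 + (256)*s^8)*x^0 +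
      ((8)*s^1 + (-80)*s^3 + (192)*s^5 + (-128)*s^7)*x^1) * (((x - s)^2 + c^2)^1)⁻¹)
      _ ((2)*s^1)
      _ ((-4)*s^1 + (8)*s^3)
      _ ((6)*s^1 + (-32)*s^3 + (32)*s^5)
      _ ((-8)*s^1 + (80)*s^3 + (-192)*s^5 + (128)*s^7)
      ?_ ?_
  · exact Continuous.mul (by fun_prop) (Continuous.inv₀ (by fun_prop) (fun x => pow_ne_zero _ (hq x)))
  · intro x
    have hx := hq x
    rw [h] at hx ⊢
    field_simp
    ring

lemma exp_4 (s c : ℝ) (hc : 0 < c) (h : c^2 = 1 - s^2) :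
    HasE (fun ε => (1 / (2 * ε)) * ∫ x in (-ε)..ε, (((x - s)^2 + c^2)^2)⁻¹)
      ((1)*s^0)
      (((-2)*s^0 + (12)*s^2)/3)
      (((3)*s^0 + (-48)*s^2 + (80)*s^4)/5)
      (((-4)*s^0 + (120)*s^2 + (-480)*s^4 + (448)*s^6)/7) := by
  have hq : ∀ x : ℝ, (x - s)^2 + c^2 ≠ 0 := fun x => by positivity
  refine hasE_avg _ (fun x => (((5)*s^0 + (-240)*s^2 + (1680)*s^4 + (-3584)*s^6 + (2304)*s^8)*x^0 +
      ((40)*s^1 + (-160)*s^3 + (-1344)*s^5 + (5120)*s^7 + (-4096)*s^9)*x^1 +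
      ((4)*s^0 + (-280)*s^2 + (2400)*s^4 + (-5824)*s^6 + (4096)*s^8)*x^2 +
      ((40)*s^1 + (-480)*s^3 + (1344)*s^5 + (-1024)*s^7)*x^3) * (((x - s)^2 + c^2)^2)⁻¹)
      _ ((4)*s^1)
      _ ((-12)*s^1 + (32)*s^3)
      _ ((24)*s^1 + (-160)*s^3 + (192)*s^5)
      _ ((-40)*s^1 + (480)*s^3 + (-1344)*s^5 + (1024)*s^7)
      ?_ ?_
  · exact Continuous.mul (by fun_prop) (Continuous.inv₀ (by fun_prop) (fun x => pow_ne_zero _ (hq x)))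
  · intro x
    have hx := hq x
    rw [h] at hx ⊢
    field_simp
    ring

lemma exp_6 (s c : ℝ) (hc : 0 < c) (h : c^2 = 1 - s^2) :
    HasE (fun ε => (1 / (2 * ε)) * ∫ x in (-ε)..ε, (((x - s)^2 + c^2)^3)⁻¹)
      ((1)*s^0)
      (((-3)*s^0 + (24)*s^2)/3)
      (((6)*s^0 + (-120)*s^2 + (240)*s^4)/5)
      (((-10)*s^0 + (360)*s^2 + (-1680)*s^4 + (1792)*s^6)/7) := by
  have hq : ∀ x : ℝ, (x - s)^2 + c^2 ≠ 0 := fun x => by positivity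
  refine hasE_avg _ (fun x => (((15)*s^0 + (-840)*s^2 + (6720)*s^4 + (-16128)*s^6 + (11520)*s^8)*x^0 +
      ((120)*s^1 + (560)*s^3 + (-16128)*s^5 + (50688)*s^7 + (-40960)*s^9)*x^1 +
      ((24)*s^0 + (-1920)*s^2 + (16800)*s^4 + (-32256)*s^6 + (-9216)*s^8 + (36864)*s^10)*x^2 +
      ((240)*s^1 + (-960)*s^3 + (-14784)*s^5 + (61440)*s^7 + (-55296)*s^9)*x^3 +
      ((10)*s^0 + (-1080)*s^2 + (11760)*s^4 + (-34048)*s^6 + (27648)*s^8)*x^4 +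
      ((120)*s^1 + (-1680)*s^3 + (5376)*s^5 + (-4608)*s^7)*x^5) * (((x - s)^2 + c^2)^3)⁻¹)
      _ ((6)*s^1)
      _ ((-24)*s^1 + (80)*s^3)
      _ ((60)*s^1 + (-480)*s^3 + (672)*s^5)
      _ ((-120)*s^1 + (1680)*s^3 + (-5376)*s^5 + (4608)*s^7)
      ?_ ?_
  · exact Continuous.mul (by fun_prop) (Continuous.inv₀ (by fun_prop) (fun x => pow_ne_zero _ (hq x)))
  · intro x
    have hx := hq x
    rw [h] at hx ⊢
    field_simp
    ring

lemma exp_5 (s c : ℝ) (hc : 0 < c) (h : c^2 = 1 - s^2) :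
    HasE (fun ε => (1 / (2 * ε)) * ∫ x in (-ε)..ε, (x - s) * (((x - s)^2 + c^2)^3)⁻¹)
      ((-1)*s^1)
      (((9)*s^1 + (-24)*s^3)/3)
      (((-30)*s^1 + (200)*s^3 + (-240)*s^5)/5)
      (((70)*s^1 + (-840)*s^3 + (2352)*s^5 + (-1792)*s^7)/7) := by
  have hq : ∀ x : ℝ, (x - s)^2 + c^2 ≠ 0 := fun x => by positivity
  refine hasE_avg _ (fun x => (((-135)*s^1 + (2520)*s^3 + (-12096)*s^5 + (20736)*s^7 + (-11520)*s^9)*x^0 +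
      ((15)*s^0 + (-240)*s^2 + (-3920)*s^4 + (32256)*s^6 + (-66816)*s^8 + (40960)*s^10)*x^1 +
      ((-264)*s^1 + (6080)*s^3 + (-28896)*s^5 + (32256)*s^7 + (23552)*s^9 + (-36864)*s^11)*x^2 +
      ((24)*s^0 + (-720)*s^2 + (-1440)*s^4 + (33600)*s^6 + (-82944)*s^8 + (55296)*s^10)*x^3 +
      ((-130)*s^1 + (3720)*s^3 + (-22512)*s^5 + (44800)*s^7 + (-27648)*s^9)*x^4 +
      ((10)*s^0 + (-480)*s^2 + (3360)*s^4 + (-7168)*s^6 + (4608)*s^8)*x^5) * (((x - s)^2 + c^2)^3)⁻¹)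
      _ ((1)*s^0 + (-6)*s^2)
      _ ((-3)*s^0 + (48)*s^2 + (-80)*s^4)
      _ ((6)*s^0 + (-180)*s^2 + (720)*s^4 + (-672)*s^6)
      _ ((-10)*s^0 + (480)*s^2 + (-3360)*s^4 + (7168)*s^6 + (-4608)*s^8)
      ?_ ?_
  · exact Continuous.mul (by fun_prop) (Continuous.inv₀ (by fun_prop) (fun x => pow_ne_zero _ (hq x)))
  · intro x
    have hx := hq x
    rw [h] at hx ⊢
    field_simp
    ring

lemma HasE.div_tendsto {f : ℝ → ℝ} {a₁ a₂ a₃ : ℝ} (h : HasE f 0 a₁ a₂ a₃) :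
    Tendsto (fun ε => f ε / ε^2) (𝓝[>] (0 : ℝ)) (𝓝 a₁) := by
  have h1 : Tendsto (fun ε : ℝ => ε^6) (𝓝[>] (0 : ℝ)) (𝓝 0) :=
    tendsto_of_cont (by fun_prop) (by norm_num)
  unfold HasE at h
  have h2 := h.mul (isBigO_refl (fun ε : ℝ => (ε^2)⁻¹) (𝓝[>] (0 : ℝ)))
  have h3 : Tendsto (fun ε : ℝ => a₁ + a₂ * ε^2 + a₃ * ε^4) (𝓝[>] (0 : ℝ)) (𝓝 a₁) :=
    tendsto_of_cont (by fun_prop) (by simp)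
  have hpos : ∀ᶠ ε in 𝓝[>] (0 : ℝ), 0 < ε := eventually_mem_nhdsWithin
  have h4 : (fun ε => f ε / ε^2 - (a₁ + a₂ * ε^2 + a₃ * ε^4)) =O[𝓝[>] (0 : ℝ)]
      fun ε => ε^6 := by
    refine h2.congr' ?_ ?_
    · filter_upwards [hpos] with ε he
      field_simp
      ring
    · filter_upwards [hpos] with ε he
      field_simp
  simpa using (h4.trans_tendsto h1).add h3

theorem snr_threshold2_2x3_asymptotics (θ : ℝ) (hθ : θ ∈ Set.Ioo (-(π / 2)) (π / 2))
    (S G : ℝ → ℝ) (B₁ B₂ : ℝ)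
    (hS : ∀ ε, S ε =
      ψ₂ θ ε *
          (ψ₄ θ ε +
            3 * Real.sqrt ((ψ₄ θ ε - 2 * cos θ ^ 2 * ψ₆ θ ε) ^ 2 +
              4 * cos θ ^ 2 * ψ₅' θ ε ^ 2)) /
        (2 * cos θ ^ 4 *
          (ψ₆ θ ε * (ψ₄ θ ε - cos θ ^ 2 * ψ₆ θ ε) - ψ₅' θ ε ^ 2)) - 1)
    (hG : ∀ ε, G ε = (π / (4 * ψ₂ θ ε * ε ^ 2)) * S ε)
    (hB₁ : B₁ = (5 * cos θ ^ 4 - 177 * cos θ ^ 2 + 128) / 60)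
    (hB₂ : B₂ = (-350 * cos θ ^ 6 + 10242 * cos θ ^ 4 - 19311 * cos θ ^ 2 + 10122) / 1575) :
    (fun ε : ℝ =>
        G ε -
          (3 * π / (2 * cos θ ^ 4)) * ((ε ^ 4)⁻¹ - 2 * B₁ * (ε ^ 2)⁻¹ + B₂))
      =O[𝓝[>] (0 : ℝ)] fun ε => ε ^ 2 := by
  have hc : 0 < cos θ := cos_pos_of_mem_Ioo hθ
  have hcs : cos θ ^ 2 = 1 - sin θ ^ 2 := by linarith [sin_sq_add_cos_sq θ]
  have E2 : HasE (ψ₂ θ) _ _ _ _ := exp_2 (sin θ) (cos θ) hc hcs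
  have E4 : HasE (ψ₄ θ) _ _ _ _ := exp_4 (sin θ) (cos θ) hc hcs
  have E6 : HasE (ψ₆ θ) _ _ _ _ := exp_6 (sin θ) (cos θ) hc hcs
  have E5 : HasE (ψ₅' θ) _ _ _ _ := exp_5 (sin θ) (cos θ) hc hcs
  have hc4 : cos θ ^ 4 = (1 - sin θ ^ 2)^2 := by rw [← hcs]; ring
  have hc6 : cos θ ^ 6 = (1 - sin θ ^ 2)^3 := by rw [← hcs]; ring
  rw [hcs, hc4] at hB₁
  rw [hcs, hc4, hc6] at hB₂
  simp only [hcs] at hS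
  generalize sin θ = s at *
  have hh := E4.add (E6.smul (-2 * (1 - s^2)))
  have h55 := E5.mul E5
  have hA := (hh.mul hh).add (h55.smul (4 * (1 - s^2)))
  have hD := (E6.mul (E4.add (E6.smul (-(1 - s^2))))).add (h55.smul (-1))
  have hA' : HasE (fun ε => (ψ₄ θ ε - 2 * (1 - s^2) * ψ₆ θ ε)^2 + 4 * (1 - s^2) * ψ₅' θ ε ^2)
      1 _ _ _ := hasE_congr hA (fun ε => by ring) (by ring) rfl rfl rfl
  have hR := hA'.sqrt
  have hN := E4.add (hR.smul 3)
  have hD' : HasE (fun ε => ψ₆ θ ε * (ψ₄ θ ε - (1 - s^2) * ψ₆ θ ε) - ψ₅' θ ε ^ 2)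
      0 (1/3) _ _ := hasE_congr hD (fun ε => by ring) (by ring) (by ring) rfl rfl
  have ht := hasE_poly 0 1 0 0
  have hB := hasE_poly 1 (-2 * B₁) B₂ 0
  have hM := ((ht.mul (hN.mul E2)).add ((ht.mul hD').smul (-2 * (1 - s^2)^2))).add
    ((hB.mul (hD'.mul E2)).smul (-12))
  have hM0 := hasE_congr (b₀ := 0) (b₁ := 0) (b₂ := 0) (b₃ := 0) hM (fun ε => rfl)
    (by ring) (by ring) (by rw [hB₁]; ring) (by rw [hB₁, hB₂]; ring)
  unfold HasE at hM0
  have hDt := hD'.div_tendsto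
  have h2t := E2.tendsto
  have hpos : ∀ᶠ ε in 𝓝[>] (0 : ℝ), 0 < ε := eventually_mem_nhdsWithin
  have hu : 0 < 1 - s^2 := by rw [← hcs]; positivity
  have hbr := ((hDt.mul h2t).inv₀ (by norm_num)).const_mul (π / (8 * (1 - s^2)^2))
  have hfin := (hM0.mul (hbr.isBigO_one ℝ)).mul
    (isBigO_refl (fun ε : ℝ => (ε^6)⁻¹) (𝓝[>] (0 : ℝ)))
  have hDne := hDt.eventually_ne (show (1/3 : ℝ) ≠ 0 by norm_num)
  have h2ne := h2t.eventually_ne (show (((1)*s^0) : ℝ) ≠ 0 by norm_num)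
  refine hfin.congr' ?_ ?_
  · filter_upwards [hpos, hDne, h2ne] with ε he hd h2
    have hd' := (div_ne_zero_iff.1 hd).1
    rw [hG, hS, hc4]
    generalize ψ₆ θ ε * (ψ₄ θ ε - (1 - s^2) * ψ₆ θ ε) - ψ₅' θ ε ^ 2 = D at *
    generalize Real.sqrt ((ψ₄ θ ε - 2 * (1 - s^2) * ψ₆ θ ε)^2 + 4 * (1 - s^2) * ψ₅' θ ε ^2) = R at *
    generalize ψ₂ θ ε = P2 at *
    generalize ψ₄ θ ε = P4 at *
    generalize 1 - s^2 = u at *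
    have := hu.ne'
    field_simp
    ring
  · filter_upwards [hpos] with ε he
    field_simp
end

section
/- Fix θ ∈ (−π/2, π/2). Then ψ₂(ε) − [1 + (1 − (4/3)·cos²θ)·ε²] = O(ε⁴) as ε → 0⁺. -/
open Real Filter Asymptotics Topology

theorem psi2_aux_poly (s ε : ℝ) :
    ∫ x in (-ε)..ε, (1 + 2 * s * x + (4 * s ^ 2 - 1) * x ^ 2 + (8 * s ^ 3 - 4 * s) * x ^ 3)
      = 2 * ε + (4 * s ^ 2 - 1) * (2 * ε ^ 3 / 3) := by
  have h : ∀ x ∈ Set.uIcc (-ε) ε, HasDerivAt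
      (fun x : ℝ => x + s * x ^ 2 + (4 * s ^ 2 - 1) / 3 * x ^ 3 + (2 * s ^ 3 - s) * x ^ 4)
      (1 + 2 * s * x + (4 * s ^ 2 - 1) * x ^ 2 + (8 * s ^ 3 - 4 * s) * x ^ 3) x := by
    intro x _
    have := (((hasDerivAt_id' x).add ((hasDerivAt_pow 2 x).const_mul s)).add
      ((hasDerivAt_pow 3 x).const_mul ((4 * s ^ 2 - 1) / 3))).add
      ((hasDerivAt_pow 4 x).const_mul (2 * s ^ 3 - s))
    refine this.congr_deriv ?_
    norm_num
    ring
  rw [intervalIntegral.integral_eq_sub_of_hasDerivAt h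
    (Continuous.intervalIntegrable (by fun_prop) _ _)]
  ring

theorem psi2_aux_bound (s c x : ℝ) (h : s ^ 2 + c ^ 2 = 1) (hx : |x| ≤ 1 / 2) :
    |((x - s) ^ 2 + c ^ 2)⁻¹
      - (1 + 2 * s * x + (4 * s ^ 2 - 1) * x ^ 2 + (8 * s ^ 3 - 4 * s) * x ^ 3)|
      ≤ 164 * |x| ^ 4 := by
  have hs : |s| ≤ 1 := by
    rw [abs_le_one_iff_mul_self_le_one]; nlinarith [sq_nonneg c]
  have hsx : |s * x| ≤ |x| := by
    rw [abs_mul]; nlinarith [abs_nonneg x]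
  have hq : 1 / 4 ≤ (x - s) ^ 2 + c ^ 2 := by
    have h1 : (x - s) ^ 2 + c ^ 2 = 1 - 2 * (s * x) + |x| ^ 2 := by
      rw [sq_abs]; linear_combination h
    rw [h1]
    nlinarith [le_abs_self (s * x)]
  have hq0 : 0 < (x - s) ^ 2 + c ^ 2 := by linarith
  have e : ((x - s) ^ 2 + c ^ 2)⁻¹
      - (1 + 2 * s * x + (4 * s ^ 2 - 1) * x ^ 2 + (8 * s ^ 3 - 4 * s) * x ^ 3)
      = x ^ 4 * ((16 * s ^ 4 - 12 * s ^ 2 + 1) - (8 * s ^ 3 - 4 * s) * x)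
        / ((x - s) ^ 2 + c ^ 2) := by
    rw [eq_div_iff hq0.ne', sub_mul, inv_mul_cancel₀ hq0.ne']
    have hc : c ^ 2 = 1 - s ^ 2 := by linarith
    rw [hc]; ring
  have hn : |(16 * s ^ 4 - 12 * s ^ 2 + 1) - (8 * s ^ 3 - 4 * s) * x| ≤ 41 := by
    have h2 : s ^ 2 ≤ 1 := by nlinarith [sq_nonneg c]
    have h2' := sq_nonneg s
    have h3 : |(8 * s ^ 3 - 4 * s) * x| ≤ 4 := by
      have : (8 * s ^ 3 - 4 * s) * x = (8 * s ^ 2 - 4) * (s * x) := by ring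
      rw [this, abs_mul]
      have h5 : |8 * s ^ 2 - 4| ≤ 4 := by rw [abs_le]; constructor <;> linarith
      nlinarith [abs_nonneg (s * x), abs_nonneg (8 * s ^ 2 - 4)]
    have h4 := abs_le.1 h3
    rw [abs_le]; constructor <;> nlinarith
  rw [e, abs_div, abs_mul, abs_pow, abs_of_pos hq0, div_le_iff₀ hq0]
  have := pow_nonneg (abs_nonneg x) 4
  nlinarith [mul_le_mul_of_nonneg_left hn this, mul_le_mul_of_nonneg_left hq this]

theorem psi2_taylor (θ : ℝ) (hθ : θ ∈ Set.Ioo (-(π / 2)) (π / 2)) :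
    (fun ε : ℝ => ψ₂ θ ε - (1 + (1 - (4 / 3) * cos θ ^ 2) * ε ^ 2))
      =O[𝓝[>] (0 : ℝ)] fun ε => ε ^ 4 := by
  have hc : 0 < cos θ := cos_pos_of_mem_Ioo hθ
  have hsc := sin_sq_add_cos_sq θ
  refine IsBigO.of_bound 164 ?_
  filter_upwards [Ioc_mem_nhdsGT (show (0 : ℝ) < 1 / 2 by norm_num)] with ε hε
  obtain ⟨h0, h1⟩ := hε
  unfold ψ₂
  generalize sin θ = s at *
  generalize cos θ = c at *
  have hi : IntervalIntegrable (fun x : ℝ => ((x - s) ^ 2 + c ^ 2)⁻¹)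
      MeasureTheory.volume (-ε) ε := by
    apply Continuous.intervalIntegrable
    exact Continuous.inv₀ (by fun_prop) (fun x => by positivity)
  have hp : IntervalIntegrable (fun x : ℝ =>
      1 + 2 * s * x + (4 * s ^ 2 - 1) * x ^ 2 + (8 * s ^ 3 - 4 * s) * x ^ 3)
      MeasureTheory.volume (-ε) ε := Continuous.intervalIntegrable (by fun_prop) _ _
  have hs := intervalIntegral.integral_sub hi hp
  rw [psi2_aux_poly] at hs
  have hb := intervalIntegral.norm_integral_le_of_norm_le_const (a := -ε) (b := ε)
    (C := 164 * ε ^ 4) (f := fun x : ℝ => ((x - s) ^ 2 + c ^ 2)⁻¹ -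
      (1 + 2 * s * x + (4 * s ^ 2 - 1) * x ^ 2 + (8 * s ^ 3 - 4 * s) * x ^ 3)) (by
    intro x hx
    rw [Set.uIoc_of_le (by linarith)] at hx
    have hx' : |x| ≤ ε := abs_le.2 ⟨hx.1.le, hx.2⟩
    refine (psi2_aux_bound s c x hsc (hx'.trans h1)).trans ?_
    gcongr)
  rw [hs] at hb
  generalize (∫ x in (-ε)..ε, ((x - s) ^ 2 + c ^ 2)⁻¹) = I at *
  have e : 1 / (2 * ε) * I - (1 + (1 - 4 / 3 * c ^ 2) * ε ^ 2)
      = (I - (2 * ε + (4 * s ^ 2 - 1) * (2 * ε ^ 3 / 3))) / (2 * ε) := by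
    have hc2 : c ^ 2 = 1 - s ^ 2 := by linarith
    rw [hc2]; field_simp; ring
  rw [e, norm_div, Real.norm_of_nonneg (show 0 ≤ 2 * ε by linarith),
    Real.norm_of_nonneg (show 0 ≤ ε ^ 4 by positivity), div_le_iff₀ (by linarith)]
  rw [show |ε - -ε| = 2 * ε by rw [abs_of_pos] <;> linarith] at hb
  exact hb
end

section
/- Fix θ ∈ (−π/2, π/2). Then ψ₄(ε) − [1 + 2·(5/3 − 2·cos²θ)·ε²] = O(ε⁴) as ε → 0⁺. -/
open Real Filter Asymptotics Topology

theorem psi4_pt (s x : ℝ) (hs : |s| ≤ 1) (hx : |x| ≤ 1 / 4) :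
    1 / 4 ≤ (1 - 2 * s * x + x ^ 2) ^ 2 ∧
    |((1 - 2 * s * x + x ^ 2) ^ 2)⁻¹ -
      (1 + 4 * s * x + (12 * s ^ 2 - 2) * x ^ 2 + (32 * s ^ 3 - 12 * s) * x ^ 3)| ≤
      4000 * x ^ 4 := by
  have hsx : |s * x| ≤ 1 / 4 := by
    rw [abs_mul]
    nlinarith [abs_nonneg s, abs_nonneg x]
  have hq : 1 / 2 ≤ 1 - 2 * s * x + x ^ 2 := by
    nlinarith [(abs_le.mp hsx).2, sq_nonneg x]
  have hq2 : 1 / 4 ≤ (1 - 2 * s * x + x ^ 2) ^ 2 := by nlinarith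
  refine ⟨hq2, ?_⟩
  set q := (1 - 2 * s * x + x ^ 2) ^ 2 with hqd
  have hq0 : 0 < q := by linarith
  let R : ℝ := -(1 + 4 * s * (-4 * s) + (12 * s ^ 2 - 2) * (4 * s ^ 2 + 2)
      + (32 * s ^ 3 - 12 * s) * (-4 * s))
      - (4 * s - 4 * s * (12 * s ^ 2 - 2) + (32 * s ^ 3 - 12 * s) * (4 * s ^ 2 + 2)) * x
      - ((12 * s ^ 2 - 2) - 4 * s * (32 * s ^ 3 - 12 * s)) * x ^ 2
      - (32 * s ^ 3 - 12 * s) * x ^ 3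
  have key : q⁻¹ - (1 + 4 * s * x + (12 * s ^ 2 - 2) * x ^ 2 + (32 * s ^ 3 - 12 * s) * x ^ 3)
      = x ^ 4 * R * q⁻¹ := by
    have : 1 - (1 + 4 * s * x + (12 * s ^ 2 - 2) * x ^ 2 + (32 * s ^ 3 - 12 * s) * x ^ 3) * q
      = x ^ 4 * R := by
      simp only [hqd, R]; ring
    rw [← this]; field_simp
  have hR : |R| ≤ 1000 := by
    have hx1 : |x| ≤ 1 := by linarith
    have m : ∀ i j : ℕ, |s ^ i * x ^ j| ≤ 1 := by
      intro i j
      rw [abs_mul, abs_pow, abs_pow]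
      exact mul_le_one₀ (pow_le_one₀ (abs_nonneg _) hs) (by positivity)
        (pow_le_one₀ (abs_nonneg _) hx1)
    have m' := fun i j => abs_le.mp (m i j)
    simp only [R]
    rw [abs_le]
    have h20 := m' 2 0
    have h40 := m' 4 0
    have h11 := m' 1 1
    have h31 := m' 3 1
    have h51 := m' 5 1
    have h02 := m' 0 2
    have h22 := m' 2 2
    have h42 := m' 4 2
    have h13 := m' 1 3
    have h33 := m' 3 3
    simp only [pow_zero, mul_one, one_mul, pow_one] at h20 h40 h11 h31 h51 h02 h22 h42 h13 h33
    constructor <;> ring_nf at * <;> linarith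
  have hqi : q⁻¹ ≤ 4 := by
    rw [inv_le_comm₀ hq0 (by norm_num)]; linarith
  have hqi0 : 0 < q⁻¹ := inv_pos.mpr hq0
  rw [key, abs_mul, abs_mul, abs_of_pos hqi0, abs_of_nonneg (by positivity : 0 ≤ x ^ 4)]
  have h4 : 0 ≤ x ^ 4 := by positivity
  calc x ^ 4 * |R| * q⁻¹ ≤ x ^ 4 * 1000 * 4 := by gcongr
    _ = _ := by ring

theorem psi4_taylor (θ : ℝ) (hθ : θ ∈ Set.Ioo (-(π / 2)) (π / 2)) :
    (fun ε : ℝ => ψ₄ θ ε - (1 + 2 * (5 / 3 - 2 * cos θ ^ 2) * ε ^ 2))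
      =O[𝓝[>] (0 : ℝ)] fun ε => ε ^ 4 := by
  apply IsBigO.of_bound 4000
  filter_upwards [Ioo_mem_nhdsGT (show (0 : ℝ) < 1 / 4 by norm_num)] with ε hε
  obtain ⟨h0, h1⟩ := hε
  have hc : cos θ ^ 2 = 1 - sin θ ^ 2 := by linarith [sin_sq_add_cos_sq θ]
  have hs : |sin θ| ≤ 1 := abs_sin_le_one θ
  unfold ψ₄
  have hfun : ∀ x : ℝ, (x - sin θ) ^ 2 + cos θ ^ 2 = 1 - 2 * sin θ * x + x ^ 2 := by
    intro x; rw [hc]; ring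
  simp only [hfun]
  rw [hc]
  generalize sin θ = s at *
  have hmem : ∀ x ∈ Set.uIcc (-ε) ε, |x| ≤ ε := by
    intro x hx
    rw [Set.uIcc_of_le (by linarith)] at hx
    exact abs_le.mpr hx
  let P : ℝ → ℝ := fun x =>
    1 + 4 * s * x + (12 * s ^ 2 - 2) * x ^ 2 + (32 * s ^ 3 - 12 * s) * x ^ 3
  have hPi : IntervalIntegrable P MeasureTheory.volume (-ε) ε := by
    apply Continuous.intervalIntegrable; fun_prop
  have hfi : IntervalIntegrable (fun x => ((1 - 2 * s * x + x ^ 2) ^ 2)⁻¹)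
      MeasureTheory.volume (-ε) ε := by
    apply ContinuousOn.intervalIntegrable
    apply ContinuousOn.inv₀ (by fun_prop)
    intro x hx
    have := (psi4_pt s x hs (by linarith [hmem x hx])).1
    linarith
  have hP : ∫ x in (-ε)..ε, P x = 2 * ε + (12 * s ^ 2 - 2) * (2 * ε ^ 3 / 3) := by
    have hd : ∀ x ∈ Set.uIcc (-ε) ε, HasDerivAt (fun x : ℝ => x + 2 * s * x ^ 2
        + (12 * s ^ 2 - 2) / 3 * x ^ 3 + (32 * s ^ 3 - 12 * s) / 4 * x ^ 4) (P x) x := by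
      intro x _
      have h := (((hasDerivAt_id' x).add ((hasDerivAt_pow 2 x).const_mul (2 * s))).add
        ((hasDerivAt_pow 3 x).const_mul ((12 * s ^ 2 - 2) / 3))).add
        ((hasDerivAt_pow 4 x).const_mul ((32 * s ^ 3 - 12 * s) / 4))
      refine h.congr_deriv ?_
      simp only [P]; push_cast; ring
    rw [intervalIntegral.integral_eq_sub_of_hasDerivAt hd hPi]
    ring
  have hb : ‖∫ x in (-ε)..ε, (((1 - 2 * s * x + x ^ 2) ^ 2)⁻¹ - P x)‖
      ≤ (4000 * ε ^ 4) * |ε - -ε| := by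
    apply intervalIntegral.norm_integral_le_of_norm_le_const
    intro x hx
    have hx' := hmem x (Set.uIoc_subset_uIcc hx)
    refine ((psi4_pt s x hs (by linarith)).2).trans ?_
    have : x ^ 4 ≤ ε ^ 4 := by
      have := pow_le_pow_left₀ (abs_nonneg x) hx' 4
      rwa [← abs_pow, abs_of_nonneg (by positivity)] at this
    linarith
  rw [intervalIntegral.integral_sub hfi hPi, hP] at hb
  generalize (∫ x in (-ε)..ε, ((1 - 2 * s * x + x ^ 2) ^ 2)⁻¹) = I at *
  have e : 1 / (2 * ε) * I - (1 + 2 * (5 / 3 - 2 * (1 - s ^ 2)) * ε ^ 2)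
      = 1 / (2 * ε) * (I - (2 * ε + (12 * s ^ 2 - 2) * (2 * ε ^ 3 / 3))) := by
    field_simp; ring
  rw [e, norm_mul, Real.norm_of_nonneg (by positivity : 0 ≤ 1 / (2 * ε)),
    Real.norm_of_nonneg (by positivity : 0 ≤ ε ^ 4)]
  rw [abs_of_pos (by linarith)] at hb
  calc _ ≤ 1 / (2 * ε) * (4000 * ε ^ 4 * (ε - -ε)) := by gcongr
    _ = _ := by field_simp; ring
end

section
/- Fix θ ∈ (−π/2, π/2). Then ψ̄₅(ε) − [−sin θ − (5 − 8·cos²θ)·sin θ·ε²] = O(ε⁴) as ε → 0⁺. -/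
open Real Filter Asymptotics Topology

theorem psi5bar_taylor (θ : ℝ) (hθ : θ ∈ Set.Ioo (-(π / 2)) (π / 2)) :
    (fun ε : ℝ => ψ₅' θ ε - (-sin θ - (5 - 8 * cos θ ^ 2) * sin θ * ε ^ 2))
      =O[𝓝[>] (0 : ℝ)] fun ε => ε ^ 4 := by
  have hc : 0 < cos θ := cos_pos_of_mem_Ioo hθ
  have hsc : cos θ ^ 2 = 1 - sin θ ^ 2 := by
    have := sin_sq_add_cos_sq θ
    linarith
  unfold ψ₅'
  set s := sin θ with hs
  have hq : ∀ x : ℝ, (x - s) ^ 2 + cos θ ^ 2 ≠ 0 := fun x => by positivity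
  have hint : ∀ ε : ℝ, ∫ x in (-ε)..ε, (x - s) * (((x - s) ^ 2 + cos θ ^ 2) ^ 3)⁻¹
      = -(1 / 4) * (((ε - s) ^ 2 + cos θ ^ 2) ^ 2)⁻¹
        - -(1 / 4) * (((-ε - s) ^ 2 + cos θ ^ 2) ^ 2)⁻¹ := by
    intro ε
    refine intervalIntegral.integral_eq_sub_of_hasDerivAt
      (f := fun x => -(1 / 4) * (((x - s) ^ 2 + cos θ ^ 2) ^ 2)⁻¹) ?_ ?_
    · intro x _
      have h1 : HasDerivAt (fun x : ℝ => ((x - s) ^ 2 + cos θ ^ 2) ^ 2)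
          (2 * ((x - s) ^ 2 + cos θ ^ 2) * (2 * (x - s))) x := by
        have := ((((hasDerivAt_id x).sub_const s).pow 2).add_const (cos θ ^ 2)).pow 2
        exact this.congr_deriv (by simp)
      have h2 := (h1.inv (pow_ne_zero 2 (hq x))).const_mul (-(1 / 4))
      refine h2.congr_deriv ?_
      have := hq x
      field_simp
      ring
    · apply Continuous.intervalIntegrable
      exact (by fun_prop : Continuous fun x : ℝ => x - s).mul
        (Continuous.inv₀ (by fun_prop) (fun x => pow_ne_zero 3 (hq x)))
  set a : ℝ := 2 - 4 * s ^ 2 with ha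
  set g : ℝ → ℝ := fun ε => s * ((a ^ 2 + 2 + 2 * a * (1 - 2 * a))
    + ε ^ 2 * (2 * a + (1 - 2 * a) * (a ^ 2 + 2))
    + ε ^ 4 * (1 + 2 * a * (1 - 2 * a)) + ε ^ 6 * (1 - 2 * a))
      / (1 + a * ε ^ 2 + ε ^ 4) ^ 2 with hg
  have hcont : ContinuousAt g 0 := by
    apply ContinuousAt.div
    · fun_prop
    · fun_prop
    · norm_num
  have hO : g =O[𝓝[>] (0 : ℝ)] fun _ => (1 : ℝ) :=
    (hcont.tendsto.mono_left nhdsWithin_le_nhds).isBigO_one ℝ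
  have hmain := (isBigO_refl (fun ε : ℝ => ε ^ 4) (𝓝[>] (0 : ℝ))).mul hO
  simp only [mul_one] at hmain
  refine hmain.congr' ?_ EventuallyEq.rfl
  filter_upwards [self_mem_nhdsWithin] with ε hε
  have hε0 : ε ≠ 0 := ne_of_gt hε
  rw [hint]
  have h1 := hq ε
  have h2 := hq (-ε)
  have e1 : (ε - s) ^ 2 + cos θ ^ 2 = 1 - 2 * s * ε + ε ^ 2 := by rw [hsc]; ring
  have e2 : (-ε - s) ^ 2 + cos θ ^ 2 = 1 + 2 * s * ε + ε ^ 2 := by rw [hsc]; ring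
  rw [e1] at h1
  rw [e2] at h2
  have e3 : 1 + a * ε ^ 2 + ε ^ 4 = (1 - 2 * s * ε + ε ^ 2) * (1 + 2 * s * ε + ε ^ 2) := by
    rw [ha]; ring
  simp only [hg]
  rw [e1, e2, e3, hsc, ha]
  generalize hA : 1 - 2 * s * ε + ε ^ 2 = A at *
  generalize hB : 1 + 2 * s * ε + ε ^ 2 = B at *
  field_simp
  rw [← hA, ← hB]
  ring
end

section
/- Fix θ ∈ (−π/2, π/2). Then ψ₂(ε)·Δ(ε) − [1 + (2/3)·cos²θ·ε² + (2/3)·cos²θ·(2 − (11/5)·cos²θ)·ε⁴] = O(ε⁶) as ε → 0⁺. -/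
open Real Filter Asymptotics Topology

lemma near_zero : ∀ᶠ ε : ℝ in 𝓝[>] (0 : ℝ), 0 < ε ∧ ε ≤ 1 / 2 := by
  filter_upwards [Ioo_mem_nhdsGT (show (0 : ℝ) < 1 / 2 by norm_num)] with x hx
  exact ⟨hx.1, hx.2.le⟩

lemma integrand_bound (s c x : ℝ) (h : s ^ 2 + c ^ 2 = 1) (hx : |x| ≤ 1 / 2) :
    1 / 4 ≤ (x - s) ^ 2 + c ^ 2 := by
  have hs : |s| ≤ 1 := by
    rw [← sq_le_one_iff_abs_le_one]; nlinarith [sq_nonneg c]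
  have h1 : x * s ≤ |x| := by
    calc x * s ≤ |x * s| := le_abs_self _
      _ = |x| * |s| := abs_mul _ _
      _ ≤ |x| * 1 := by gcongr
      _ = |x| := mul_one _
  nlinarith [sq_abs x, abs_nonneg x]

lemma psi_approx (θ : ℝ) :
    (fun ε : ℝ => ψ₂ θ ε - (1 + (3 - 4 * cos θ ^ 2) / 3 * ε ^ 2 +
      (5 - 20 * cos θ ^ 2 + 16 * cos θ ^ 4) / 5 * ε ^ 4))
      =O[𝓝[>] (0 : ℝ)] fun ε => ε ^ 6 := by
  set s := sin θ with hs
  set c := cos θ with hc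
  have hsc : s ^ 2 + c ^ 2 = 1 := sin_sq_add_cos_sq θ
  set u1 := 2 * s with hu1
  set u2 := 2 * s * u1 - 1 with hu2
  set u3 := 2 * s * u2 - u1 with hu3
  set u4 := 2 * s * u3 - u2 with hu4
  set u5 := 2 * s * u4 - u3 with hu5
  set u6 := 2 * s * u5 - u4 with hu6
  have e2 : u2 = 3 - 4 * c ^ 2 := by
    rw [hu2, hu1]; linear_combination 4 * hsc
  have e4 : u4 = 5 - 20 * c ^ 2 + 16 * c ^ 4 := by
    rw [hu4, hu3, hu2, hu1]
    linear_combination (16 * s ^ 2 - 16 * c ^ 2 + 4) * hsc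
  refine IsBigO.of_bound (4 * (|u6| + |u5|)) ?_
  filter_upwards [near_zero] with ε ⟨h0, h1⟩
  let P : ℝ → ℝ := fun x => 1 + u1 * x + u2 * x ^ 2 + u3 * x ^ 3 + u4 * x ^ 4 + u5 * x ^ 5
  have hP : ∫ x in (-ε)..ε, P x = 2 * ε * (1 + u2 / 3 * ε ^ 2 + u4 / 5 * ε ^ 4) := by
    have hd : ∀ x ∈ Set.uIcc (-ε) ε, HasDerivAt (fun x : ℝ => x + u1 / 2 * x ^ 2 + u2 / 3 * x ^ 3
        + u3 / 4 * x ^ 4 + u4 / 5 * x ^ 5 + u5 / 6 * x ^ 6) (P x) x := by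
      intro x _
      have := (((((hasDerivAt_id x).add ((hasDerivAt_pow 2 x).const_mul (u1 / 2))).add
        ((hasDerivAt_pow 3 x).const_mul (u2 / 3))).add
        ((hasDerivAt_pow 4 x).const_mul (u3 / 4))).add
        ((hasDerivAt_pow 5 x).const_mul (u4 / 5))).add
        ((hasDerivAt_pow 6 x).const_mul (u5 / 6))
      refine this.congr_deriv ?_
      simp only [P]; push_cast; ring
    rw [intervalIntegral.integral_eq_sub_of_hasDerivAt hd
      (Continuous.intervalIntegrable (by fun_prop) _ _)]
    ring
  have hq : ∀ x, |x| ≤ ε → 1 / 4 ≤ (x - s) ^ 2 + c ^ 2 := fun x hx =>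
    integrand_bound s c x hsc (hx.trans h1)
  have hI : IntervalIntegrable (fun x => ((x - s) ^ 2 + c ^ 2)⁻¹) MeasureTheory.volume (-ε) ε := by
    apply ContinuousOn.intervalIntegrable
    apply ContinuousOn.inv₀ (by fun_prop)
    intro x hx
    rw [Set.uIcc_of_le (by linarith)] at hx
    have := hq x (abs_le.2 hx)
    linarith
  have key : |(∫ x in (-ε)..ε, ((x - s) ^ 2 + c ^ 2)⁻¹) - ∫ x in (-ε)..ε, P x| ≤
      (4 * (|u6| + |u5|) * ε ^ 6) * |ε - (-ε)| := by
    rw [← intervalIntegral.integral_sub hI (Continuous.intervalIntegrable (by fun_prop) _ _)]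
    rw [← Real.norm_eq_abs (∫ x in (-ε)..ε, _)]
    apply intervalIntegral.norm_integral_le_of_norm_le_const
    intro x hx
    rw [Set.uIoc_of_le (by linarith)] at hx
    have hxa : |x| ≤ ε := abs_le.2 ⟨hx.1.le, hx.2⟩
    have hqx := hq x hxa
    have hqp : 0 < (x - s) ^ 2 + c ^ 2 := by linarith
    have e : ((x - s) ^ 2 + c ^ 2)⁻¹ - P x = x ^ 6 * (u6 - u5 * x) * ((x - s) ^ 2 + c ^ 2)⁻¹ := by
      have h2 : (x - s) ^ 2 + c ^ 2 = 1 - 2 * s * x + x ^ 2 := by linear_combination hsc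
      rw [h2] at hqp ⊢
      field_simp
      simp only [P, hu6, hu5, hu4, hu3, hu2, hu1]
      ring
    rw [e, Real.norm_eq_abs, abs_mul, abs_mul, abs_inv, abs_of_pos hqp, abs_pow]
    have i1 : ((x - s) ^ 2 + c ^ 2)⁻¹ ≤ 4 := by
      rw [inv_le_comm₀ hqp (by norm_num)]; linarith
    have i2 : |u6 - u5 * x| ≤ |u6| + |u5| := by
      calc |u6 - u5 * x| ≤ |u6| + |u5 * x| := abs_sub _ _
        _ = |u6| + |u5| * |x| := by rw [abs_mul]
        _ ≤ |u6| + |u5| * 1 := by gcongr; linarith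
        _ = _ := by ring
    calc |x| ^ 6 * |u6 - u5 * x| * ((x - s) ^ 2 + c ^ 2)⁻¹
        ≤ ε ^ 6 * (|u6| + |u5|) * 4 := by gcongr
      _ = _ := by ring
  rw [hP] at key
  have e : ψ₂ θ ε - (1 + (3 - 4 * c ^ 2) / 3 * ε ^ 2 +
      (5 - 20 * c ^ 2 + 16 * c ^ 4) / 5 * ε ^ 4) = (1 / (2 * ε)) *
      ((∫ x in (-ε)..ε, ((x - s) ^ 2 + c ^ 2)⁻¹) -
        2 * ε * (1 + u2 / 3 * ε ^ 2 + u4 / 5 * ε ^ 4)) := by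
    rw [ψ₂, ← e2, ← e4, ← hs, ← hc]
    generalize (∫ x in (-ε)..ε, ((x - s) ^ 2 + c ^ 2)⁻¹) = J
    field_simp
  have hεε : |ε - -ε| = 2 * ε := by rw [abs_of_pos (by linarith)]; ring
  rw [hεε] at key
  rw [e, Real.norm_eq_abs, abs_mul, abs_of_pos (by positivity : 0 < 1 / (2 * ε)),
    Real.norm_eq_abs, abs_of_pos (by positivity : 0 < ε ^ 6), one_div,
    inv_mul_le_iff₀ (by positivity)]
  linarith

lemma delta_approx (θ : ℝ) :
    (fun ε : ℝ => Δ θ ε - (1 + (2 * cos θ ^ 2 - 1) * ε ^ 2 +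
      (2 * cos θ ^ 2 - 2 * cos θ ^ 4) * ε ^ 4))
      =O[𝓝[>] (0 : ℝ)] fun ε => ε ^ 6 := by
  have hc1 : cos θ ^ 2 ≤ 1 := cos_sq_le_one θ
  set c := cos θ with hc
  set m := 2 * c ^ 2 - 1 with hm
  set k := 2 * c ^ 2 - 2 * c ^ 4 with hk
  have hk0 : 0 ≤ k := by rw [hk]; nlinarith [sq_nonneg c]
  have hm1 : -1 ≤ m := by rw [hm]; nlinarith [sq_nonneg c]
  refine IsBigO.of_bound (2 * (|2 * m * k| + k ^ 2)) ?_
  filter_upwards [near_zero] with ε ⟨h0, h1⟩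
  have hT : 1 / 2 ≤ 1 + m * ε ^ 2 + k * ε ^ 4 := by
    have : 0 ≤ k * ε ^ 4 := by positivity
    nlinarith [sq_nonneg ε]
  have hD0 : 0 ≤ Δ θ ε := Real.sqrt_nonneg _
  have hD : Δ θ ε ^ 2 = (1 - ε ^ 2) ^ 2 + (2 * ε * c) ^ 2 := Real.sq_sqrt (by positivity)
  generalize Δ θ ε = D at *
  set T := 1 + m * ε ^ 2 + k * ε ^ 4 with hTd
  have e : (D - T) * (D + T) = - (ε ^ 6 * (2 * m * k + k ^ 2 * ε ^ 2)) := by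
    have : (D - T) * (D + T) = D ^ 2 - T ^ 2 := by ring
    rw [this, hD, hTd, hk, hm]; ring
  have e' : |D - T| * (D + T) = ε ^ 6 * |2 * m * k + k ^ 2 * ε ^ 2| := by
    rw [← abs_of_nonneg (by linarith : 0 ≤ D + T), ← abs_mul, e, abs_neg, abs_mul,
      abs_of_pos (by positivity : 0 < ε ^ 6)]
  have i : |2 * m * k + k ^ 2 * ε ^ 2| ≤ |2 * m * k| + k ^ 2 := by
    refine (abs_add_le _ _).trans ?_
    rw [abs_of_nonneg (by positivity : 0 ≤ k ^ 2 * ε ^ 2)]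
    have : ε ^ 2 ≤ 1 := by nlinarith
    nlinarith [sq_nonneg k]
  rw [Real.norm_eq_abs, Real.norm_eq_abs, abs_of_pos (by positivity : 0 < ε ^ 6)]
  have j : |D - T| * (1 / 2) ≤ |D - T| * (D + T) := by gcongr; linarith
  have l : ε ^ 6 * |2 * m * k + k ^ 2 * ε ^ 2| ≤ ε ^ 6 * (|2 * m * k| + k ^ 2) := by gcongr
  linarith

lemma cont_bigO_one (f : ℝ → ℝ) (hf : Continuous f) :
    f =O[𝓝[>] (0 : ℝ)] fun _ => (1 : ℝ) :=
  ((hf.tendsto 0).mono_left nhdsWithin_le_nhds).isBigO_one ℝ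

theorem psi2_Delta_taylor (θ : ℝ) (hθ : θ ∈ Set.Ioo (-(π / 2)) (π / 2)) :
    (fun ε : ℝ =>
        ψ₂ θ ε * Δ θ ε -
          (1 + (2 / 3) * cos θ ^ 2 * ε ^ 2 +
            (2 / 3) * cos θ ^ 2 * (2 - (11 / 5) * cos θ ^ 2) * ε ^ 4))
      =O[𝓝[>] (0 : ℝ)] fun ε => ε ^ 6 := by
  have hΔ : (fun ε => Δ θ ε) =O[𝓝[>] (0 : ℝ)] fun _ => (1 : ℝ) :=
    cont_bigO_one _ (by unfold Δ; fun_prop)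
  have hA := cont_bigO_one (fun ε => 1 + (3 - 4 * cos θ ^ 2) / 3 * ε ^ 2 +
      (5 - 20 * cos θ ^ 2 + 16 * cos θ ^ 4) / 5 * ε ^ 4) (by fun_prop)
  have hR := cont_bigO_one (fun ε =>
      (3 - 4 * cos θ ^ 2) / 3 * (2 * cos θ ^ 2 - 2 * cos θ ^ 4) +
      (5 - 20 * cos θ ^ 2 + 16 * cos θ ^ 4) / 5 * (2 * cos θ ^ 2 - 1) +
      (5 - 20 * cos θ ^ 2 + 16 * cos θ ^ 4) / 5 * (2 * cos θ ^ 2 - 2 * cos θ ^ 4) * ε ^ 2)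
      (by fun_prop)
  have h1 := (psi_approx θ).mul hΔ
  have h2 := (delta_approx θ).mul hA
  have h3 := (isBigO_refl (fun ε : ℝ => ε ^ 6) (𝓝[>] (0 : ℝ))).mul hR
  simp only [mul_one] at h1 h2 h3
  refine ((h1.add h2).add h3).congr_left ?_
  intro ε
  ring
end
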